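/- For every (d1,d2) ∈ ℝ₊², the common-reconstruction rate-distortion function satisfies R_CR(d1,d2) ≤ max{ R_{XY}(d1,d2) − R_X(d1), R_{XY}(d1,d2) − R_Y(d2) }, where R_{XY} is the joint RD function and R_X, R_Y are the marginal RD functions. -/

import Mathlib

open scoped BigOperators Classical

noncomputable section

namespace TWR

/-- Base-2 Shannon entropy of a finitely supported distribution (with the
convention `0 * log 0 = 0`, automatic since `Real.logb 2 0 = 0`). -/
def H2 {α : Type} [Fintype α] (p : α → ℝ) : ℝ :=
  -∑ a, p a * Real.logb 2 (p a)

/-- `p` is a probability mass function. -/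
def IsPmf {α : Type} [Fintype α] (p : α → ℝ) : Prop :=
  (∀ a, 0 ≤ p a) ∧ ∑ a, p a = 1

/-- `W` is a conditional pmf. -/
def IsCondPmf {α β : Type} [Fintype β] (W : α → β → ℝ) : Prop :=
  ∀ a, IsPmf (W a)

/-- Mutual information `I(A;B)` (base 2) of a joint pmf on `α × β`. -/
def MI {α β : Type} [Fintype α] [Fintype β] (p : α × β → ℝ) : ℝ :=
  H2 (fun a => ∑ b, p (a, b)) + H2 (fun b => ∑ a, p (a, b)) - H2 p

/-- Conditional entropy `H(A|B)` of a joint pmf on `α × β`. -/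
def condH {α β : Type} [Fintype α] [Fintype β] (p : α × β → ℝ) : ℝ :=
  H2 p - H2 (fun b => ∑ a, p (a, b))

/-- Conditional mutual information `I(A;C|B)` of a joint pmf on `α × β × γ`,
conditioning on the middle coordinate (`I(A;C|B) = H(A,B)+H(B,C)-H(A,B,C)-H(B)`). -/
def condMI {α β γ : Type} [Fintype α] [Fintype β] [Fintype γ] (p : α × β × γ → ℝ) : ℝ :=
  H2 (fun ab : α × β => ∑ c, p (ab.1, ab.2, c)) +
    H2 (fun bc : β × γ => ∑ a, p (a, bc.1, bc.2)) -
    H2 p - H2 (fun b : β => ∑ a, ∑ c, p (a, b, c))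

/-- Markov chain `A − B − C` for a joint pmf on `α × β × γ`. -/
def Markov {α β γ : Type} [Fintype α] [Fintype β] [Fintype γ] (p : α × β × γ → ℝ) : Prop :=
  ∀ a b c, p (a, b, c) * (∑ a', ∑ c', p (a', b, c')) =
    (∑ c', p (a, b, c')) * (∑ a', p (a', b, c))

variable {𝒳 𝒴 Xh Yh 𝒲 𝒰 𝒱 : Type}
variable [Fintype 𝒳] [Fintype 𝒴] [Fintype Xh] [Fintype Yh]
variable [Fintype 𝒲] [Fintype 𝒰] [Fintype 𝒱]

/-- The i.i.d. block source. -/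
def iid (q : 𝒳 × 𝒴 → ℝ) (n : ℕ) : (Fin n → 𝒳) × (Fin n → 𝒴) → ℝ :=
  fun xy => ∏ i, q (xy.1 i, xy.2 i)

/-- Average distortion at receiver 1 of the RD code `(f, g1, ·)`. -/
def Delta1 (q : 𝒳 × 𝒴 → ℝ) (δ1 : 𝒳 → Xh → ℝ) {n m : ℕ}
    (f : (Fin n → 𝒳) × (Fin n → 𝒴) → Fin m)
    (g1 : Fin m × (Fin n → 𝒴) → Fin n → Xh) : ℝ :=
  ∑ xy : (Fin n → 𝒳) × (Fin n → 𝒴),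
    iid q n xy * ((n : ℝ)⁻¹ * ∑ i, δ1 (xy.1 i) (g1 (f xy, xy.2) i))

/-- Average distortion at receiver 2 of the RD code `(f, ·, g2)`. -/
def Delta2 (q : 𝒳 × 𝒴 → ℝ) (δ2 : 𝒴 → Yh → ℝ) {n m : ℕ}
    (f : (Fin n → 𝒳) × (Fin n → 𝒴) → Fin m)
    (g2 : Fin m × (Fin n → 𝒳) → Fin n → Yh) : ℝ :=
  ∑ xy : (Fin n → 𝒳) × (Fin n → 𝒴),
    iid q n xy * ((n : ℝ)⁻¹ * ∑ i, δ2 (xy.2 i) (g2 (f xy, xy.1) i))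

/-- `r` is a `(d1,d2)`-achievable rate (source coding). -/
def RDAchievable (q : 𝒳 × 𝒴 → ℝ) (δ1 : 𝒳 → Xh → ℝ) (δ2 : 𝒴 → Yh → ℝ)
    (d1 d2 r : ℝ) : Prop :=
  ∀ ε > (0 : ℝ), ∃ (n m : ℕ) (f : (Fin n → 𝒳) × (Fin n → 𝒴) → Fin m)
    (g1 : Fin m × (Fin n → 𝒴) → Fin n → Xh)
    (g2 : Fin m × (Fin n → 𝒳) → Fin n → Yh),
    0 < n ∧ Real.logb 2 m / n ≤ r + ε ∧
    Delta1 q δ1 f g1 ≤ d1 + ε ∧ Delta2 q δ2 f g2 ≤ d2 + ε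

/-- The rate-distortion function `R(d1,d2)`. -/
def RD (q : 𝒳 × 𝒴 → ℝ) (δ1 : 𝒳 → Xh → ℝ) (δ2 : 𝒴 → Yh → ℝ) (d1 d2 : ℝ) : ℝ :=
  sInf {r : ℝ | 0 ≤ r ∧ RDAchievable q δ1 δ2 d1 d2 r}

/-- `r` is `(d1,d2)`-achievable with common reconstructions. -/
def CRAchievable (q : 𝒳 × 𝒴 → ℝ) (δ1 : 𝒳 → Xh → ℝ) (δ2 : 𝒴 → Yh → ℝ)
    (d1 d2 r : ℝ) : Prop :=
  ∀ ε > (0 : ℝ), ∃ (n m : ℕ) (f : (Fin n → 𝒳) × (Fin n → 𝒴) → Fin m)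
    (g1 : Fin m × (Fin n → 𝒴) → Fin n → Xh)
    (g2 : Fin m × (Fin n → 𝒳) → Fin n → Yh)
    (φ1 : Fin m × (Fin n → 𝒴) → Fin n → Yh)
    (φ2 : Fin m × (Fin n → 𝒳) → Fin n → Xh),
    0 < n ∧ Real.logb 2 m / n ≤ r + ε ∧
    Delta1 q δ1 f g1 ≤ d1 + ε ∧ Delta2 q δ2 f g2 ≤ d2 + ε ∧
    (∑ xy : (Fin n → 𝒳) × (Fin n → 𝒴),
      if φ2 (f xy, xy.1) = g1 (f xy, xy.2) then 0 else iid q n xy) ≤ ε ∧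
    (∑ xy : (Fin n → 𝒳) × (Fin n → 𝒴),
      if φ1 (f xy, xy.2) = g2 (f xy, xy.1) then 0 else iid q n xy) ≤ ε

/-- The common-reconstruction rate-distortion function `R_CR(d1,d2)`. -/
def CRRD (q : 𝒳 × 𝒴 → ℝ) (δ1 : 𝒳 → Xh → ℝ) (δ2 : 𝒴 → Yh → ℝ) (d1 d2 : ℝ) : ℝ :=
  sInf {r : ℝ | 0 ≤ r ∧ CRAchievable q δ1 δ2 d1 d2 r}

/-- The conditional rate-distortion function `R_{X|Y}(d1)`. -/
def condRD (q : 𝒳 × 𝒴 → ℝ) (δ1 : 𝒳 → Xh → ℝ) (d1 : ℝ) : ℝ :=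
  sInf {r : ℝ | ∃ W : 𝒳 × 𝒴 → Xh → ℝ, IsCondPmf W ∧
    (∑ x, ∑ y, ∑ xh, q (x, y) * W (x, y) xh * δ1 x xh) ≤ d1 ∧
    r = condMI (fun t : 𝒳 × 𝒴 × Xh => q (t.1, t.2.1) * W (t.1, t.2.1) t.2.2)}

/-- Swap the two components of a joint source. -/
def swap (q : 𝒳 × 𝒴 → ℝ) : 𝒴 × 𝒳 → ℝ := fun t => q (t.2, t.1)

/-- The marginal rate-distortion function `R_X(d)`. -/
def margRD (qX : 𝒳 → ℝ) (δ1 : 𝒳 → Xh → ℝ) (d1 : ℝ) : ℝ :=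
  sInf {r : ℝ | ∃ W : 𝒳 → Xh → ℝ, IsCondPmf W ∧
    (∑ x, ∑ xh, qX x * W x xh * δ1 x xh) ≤ d1 ∧
    r = MI (fun t : 𝒳 × Xh => qX t.1 * W t.1 t.2)}

def margX (q : 𝒳 × 𝒴 → ℝ) : 𝒳 → ℝ := fun x => ∑ y, q (x, y)
def margY (q : 𝒳 × 𝒴 → ℝ) : 𝒴 → ℝ := fun y => ∑ x, q (x, y)

/-- The joint rate-distortion function `R_{XY}(d1,d2)`. -/
def jointRD (q : 𝒳 × 𝒴 → ℝ) (δ1 : 𝒳 → Xh → ℝ) (δ2 : 𝒴 → Yh → ℝ) (d1 d2 : ℝ) : ℝ :=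
  sInf {r : ℝ | ∃ W : 𝒳 × 𝒴 → Xh × Yh → ℝ, IsCondPmf W ∧
    (∑ xy : 𝒳 × 𝒴, ∑ z : Xh × Yh, q xy * W xy z * δ1 xy.1 z.1) ≤ d1 ∧
    (∑ xy : 𝒳 × 𝒴, ∑ z : Xh × Yh, q xy * W xy z * δ2 xy.2 z.2) ≤ d2 ∧
    r = MI (fun t : (𝒳 × 𝒴) × (Xh × Yh) => q t.1 * W t.1 t.2)}

/-- The Wyner–Ziv rate-distortion function `R^{WZ}_{X|Y}(d1)`
(with auxiliary alphabet of cardinality `|𝒳| + 1`). -/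
def wzRD (q : 𝒳 × 𝒴 → ℝ) (δ1 : 𝒳 → Xh → ℝ) (d1 : ℝ) : ℝ :=
  sInf {r : ℝ | ∃ p : Fin (Fintype.card 𝒳 + 1) × 𝒳 × 𝒴 → ℝ, IsPmf p ∧
    (∀ x y, (∑ a, p (a, x, y)) = q (x, y)) ∧ Markov p ∧
    (∃ π1 : Fin (Fintype.card 𝒳 + 1) × 𝒴 → Xh,
      (∑ a, ∑ x, ∑ y, p (a, x, y) * δ1 x (π1 (a, y))) ≤ d1) ∧
    r = condMI (fun t : 𝒳 × 𝒴 × Fin (Fintype.card 𝒳 + 1) => p (t.2.2, t.1, t.2.1))}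

/-- The set over which the single-letter CR formula
`max{I(X;X̂,Ŷ|Y), I(Y;X̂,Ŷ|X)}` is minimised. -/
def crFormulaSet (q : 𝒳 × 𝒴 → ℝ) (δ1 : 𝒳 → Xh → ℝ) (δ2 : 𝒴 → Yh → ℝ)
    (d1 d2 : ℝ) : Set ℝ :=
  {r : ℝ | ∃ W : 𝒳 × 𝒴 → Xh × Yh → ℝ, IsCondPmf W ∧
    (∑ x, ∑ y, ∑ z : Xh × Yh, q (x, y) * W (x, y) z * δ1 x z.1) ≤ d1 ∧
    (∑ x, ∑ y, ∑ z : Xh × Yh, q (x, y) * W (x, y) z * δ2 y z.2) ≤ d2 ∧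
    r = max
      (condMI (fun t : 𝒳 × 𝒴 × (Xh × Yh) => q (t.1, t.2.1) * W (t.1, t.2.1) t.2.2))
      (condMI (fun t : 𝒴 × 𝒳 × (Xh × Yh) => q (t.2.1, t.1) * W (t.2.1, t.1) t.2.2))}

/-- Joint law of source blocks and channel outputs for a JSC encoder. -/
def jscP (q : 𝒳 × 𝒴 → ℝ) (qUV : 𝒲 → 𝒰 × 𝒱 → ℝ) {n m : ℕ}
    (f : (Fin n → 𝒳) × (Fin n → 𝒴) → Fin m → 𝒲)
    (x : Fin n → 𝒳) (y : Fin n → 𝒴) (u : Fin m → 𝒰) (v : Fin m → 𝒱) : ℝ :=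
  (∏ i, q (x i, y i)) * ∏ j, qUV (f (x, y) j) (u j, v j)

/-- `(d1,d2)` is achievable by joint source-channel coding with source rate `κs`
and channel rate `κc` (bandwidth expansion `κc/κs`). -/
def JSCAchievable (q : 𝒳 × 𝒴 → ℝ) (qUV : 𝒲 → 𝒰 × 𝒱 → ℝ)
    (δ1 : 𝒳 → Xh → ℝ) (δ2 : 𝒴 → Yh → ℝ) (κs κc d1 d2 : ℝ) : Prop :=
  ∀ ε > (0 : ℝ), ∃ (t n m : ℕ) (f : (Fin n → 𝒳) × (Fin n → 𝒴) → Fin m → 𝒲)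
    (g1 : (Fin m → 𝒰) × (Fin n → 𝒴) → Fin n → Xh)
    (g2 : (Fin m → 𝒱) × (Fin n → 𝒳) → Fin n → Yh),
    0 < t ∧ (n : ℝ) = κs * t ∧ (m : ℝ) = κc * t ∧
    (∑ x : Fin n → 𝒳, ∑ y : Fin n → 𝒴, ∑ u : Fin m → 𝒰, ∑ v : Fin m → 𝒱,
      jscP q qUV f x y u v * ((n : ℝ)⁻¹ * ∑ i, δ1 (x i) (g1 (u, y) i))) ≤ d1 + ε ∧
    (∑ x : Fin n → 𝒳, ∑ y : Fin n → 𝒴, ∑ u : Fin m → 𝒰, ∑ v : Fin m → 𝒱,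
      jscP q qUV f x y u v * ((n : ℝ)⁻¹ * ∑ i, δ2 (y i) (g2 (v, x) i))) ≤ d2 + ε

/-- `(d1,d2)` is achievable by joint source-channel coding with common
reconstructions, source rate `κs` and channel rate `κc`. -/
def CRJSCAchievable (q : 𝒳 × 𝒴 → ℝ) (qUV : 𝒲 → 𝒰 × 𝒱 → ℝ)
    (δ1 : 𝒳 → Xh → ℝ) (δ2 : 𝒴 → Yh → ℝ) (κs κc d1 d2 : ℝ) : Prop :=
  ∀ ε > (0 : ℝ), ∃ (t n m : ℕ) (f : (Fin n → 𝒳) × (Fin n → 𝒴) → Fin m → 𝒲)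
    (g1 : (Fin m → 𝒰) × (Fin n → 𝒴) → Fin n → Xh)
    (g2 : (Fin m → 𝒱) × (Fin n → 𝒳) → Fin n → Yh)
    (φ1 : (Fin m → 𝒰) × (Fin n → 𝒴) → Fin n → Yh)
    (φ2 : (Fin m → 𝒱) × (Fin n → 𝒳) → Fin n → Xh),
    0 < t ∧ (n : ℝ) = κs * t ∧ (m : ℝ) = κc * t ∧
    (∑ x : Fin n → 𝒳, ∑ y : Fin n → 𝒴, ∑ u : Fin m → 𝒰, ∑ v : Fin m → 𝒱,
      jscP q qUV f x y u v * ((n : ℝ)⁻¹ * ∑ i, δ1 (x i) (g1 (u, y) i))) ≤ d1 + ε ∧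
    (∑ x : Fin n → 𝒳, ∑ y : Fin n → 𝒴, ∑ u : Fin m → 𝒰, ∑ v : Fin m → 𝒱,
      jscP q qUV f x y u v * ((n : ℝ)⁻¹ * ∑ i, δ2 (y i) (g2 (v, x) i))) ≤ d2 + ε ∧
    (∑ x : Fin n → 𝒳, ∑ y : Fin n → 𝒴, ∑ u : Fin m → 𝒰, ∑ v : Fin m → 𝒱,
      if φ2 (v, x) = g1 (u, y) then 0 else jscP q qUV f x y u v) ≤ ε ∧
    (∑ x : Fin n → 𝒳, ∑ y : Fin n → 𝒴, ∑ u : Fin m → 𝒰, ∑ v : Fin m → 𝒱,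
      if φ1 (u, y) = g2 (v, x) then 0 else jscP q qUV f x y u v) ≤ ε

/-- `I(W;U)` under the joint law `pW · qUV` (U-marginal of the broadcast channel). -/
def chMIU (qUV : 𝒲 → 𝒰 × 𝒱 → ℝ) (pW : 𝒲 → ℝ) : ℝ :=
  MI (fun t : 𝒲 × 𝒰 => pW t.1 * ∑ v, qUV t.1 (t.2, v))

/-- `I(W;V)` under the joint law `pW · qUV` (V-marginal of the broadcast channel). -/
def chMIV (qUV : 𝒲 → 𝒰 × 𝒱 → ℝ) (pW : 𝒲 → ℝ) : ℝ :=
  MI (fun t : 𝒲 × 𝒱 => pW t.1 * ∑ u, qUV t.1 (u, t.2))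

/-- The doubly symmetric binary source with crossover probability `ρ`. -/
def dsbs (ρ : ℝ) : Bool × Bool → ℝ :=
  fun t => if t.1 = t.2 then (1 - ρ) / 2 else ρ / 2

/-- The Hamming distortion measure. -/
def dHam {α : Type} : α → α → ℝ := fun a b => if a = b then 0 else 1

/-- The binary entropy function (base 2). -/
def binEnt (x : ℝ) : ℝ := -(x * Real.logb 2 x) - (1 - x) * Real.logb 2 (1 - x)

/-- A difference distortion measure built from a per-letter function of the
(modular) difference. -/
def diffD {l : ℕ} (δ : Fin l → ℝ) : Fin l → Fin l → ℝ := fun a b => δ (a - b)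

/-- Capacity of the modulo-additive channel with noise `pN` and input
distortion constraint `d`. -/
def Cadd {l : ℕ} (δ : Fin l → ℝ) (d : ℝ) (pN : Fin l → ℝ) : ℝ :=
  sSup {r : ℝ | ∃ pW : Fin l → ℝ, IsPmf pW ∧ (∑ w, pW w * δ w) ≤ d ∧
    r = MI (fun t : Fin l × Fin l => pW t.1 * pN (t.2 - t.1))}

/-- The minimax (worst-noise) capacity under distortion constraint `d`. -/
def Cworst {l : ℕ} (δ : Fin l → ℝ) (d : ℝ) : ℝ :=
  sInf {r : ℝ | ∃ pN : Fin l → ℝ, IsPmf pN ∧ (∑ x, pN x * δ x) ≤ d ∧ r = Cadd δ d pN}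

/-- Wyner's common information `K(X;Y)` (auxiliary alphabet of size 4). -/
def wynerK (q : 𝒳 × 𝒴 → ℝ) : ℝ :=
  sInf {r : ℝ | ∃ W : 𝒳 × 𝒴 → Fin 4 → ℝ, IsCondPmf W ∧
    Markov (fun t : 𝒳 × Fin 4 × 𝒴 => q (t.1, t.2.2) * W (t.1, t.2.2) t.2.1) ∧
    r = MI (fun t : (𝒳 × 𝒴) × Fin 4 => q t.1 * W t.1 t.2)}

/-- The one-description (Kimura–Uyematsu) upper bound `R_U*(d1,d2)`. -/
def oneDescUB (q : 𝒳 × 𝒴 → ℝ) (δ1 : 𝒳 → Xh → ℝ) (δ2 : 𝒴 → Yh → ℝ) (d1 d2 : ℝ) : ℝ :=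
  sInf {r : ℝ | ∃ W : 𝒳 × 𝒴 → Fin (Fintype.card 𝒳 * Fintype.card 𝒴 + 2) → ℝ,
    IsCondPmf W ∧
    (∃ π1 : Fin (Fintype.card 𝒳 * Fintype.card 𝒴 + 2) × 𝒴 → Xh,
      (∑ x, ∑ y, ∑ c, q (x, y) * W (x, y) c * δ1 x (π1 (c, y))) ≤ d1) ∧
    (∃ π2 : Fin (Fintype.card 𝒳 * Fintype.card 𝒴 + 2) × 𝒳 → Yh,
      (∑ x, ∑ y, ∑ c, q (x, y) * W (x, y) c * δ2 y (π2 (c, x))) ≤ d2) ∧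
    r = max
      (condMI (fun t : 𝒳 × 𝒴 × Fin (Fintype.card 𝒳 * Fintype.card 𝒴 + 2) =>
        q (t.1, t.2.1) * W (t.1, t.2.1) t.2.2))
      (condMI (fun t : 𝒴 × 𝒳 × Fin (Fintype.card 𝒳 * Fintype.card 𝒴 + 2) =>
        q (t.2.1, t.1) * W (t.2.1, t.1) t.2.2))}

end TWR

/-!
Fix a test channel with joint law `p` of `(X, Y)` and `Z = (X̂, Ŷ)`. Draw about `2 ^ (n I(XY; Z))`
codewords independently from the law of `Zⁿ`, so that some codeword is jointly typical with the
source block, and throw the codewords at random into bins; only the bin is transmitted. A decoder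
knowing `Yⁿ` finds the codeword in its bin as soon as there are more than
`2 ^ (n (I(XY; Z) - I(Y; Z)))` bins, and symmetrically for `Xⁿ`. Both decoders then hold the same
codeword, so the reconstructions are common. Thus `I(XY; Z) - min (I(X; Z), I(Y; Z))` is
achievable, and `I(X; Z) ≥ I(X; X̂) ≥ R_X(d1)` and `I(Y; Z) ≥ I(Y; Ŷ) ≥ R_Y(d2)` by data
processing; it remains to minimise over `p`.
-/

namespace TWR

section Expectation

variable {α β : Type}

lemma le_margX [Fintype β] {p : α × β → ℝ} (hp : ∀ t, 0 ≤ p t) (t : α × β) : p t ≤ margX p t.1 :=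
  Finset.single_le_sum (f := fun b => p (t.1, b)) (fun b _ => hp (t.1, b)) (Finset.mem_univ t.2)

lemma le_margY [Fintype α] {p : α × β → ℝ} (hp : ∀ t, 0 ≤ p t) (t : α × β) : p t ≤ margY p t.2 :=
  Finset.single_le_sum (f := fun a => p (a, t.2)) (fun a _ => hp (a, t.2)) (Finset.mem_univ t.1)

variable [Fintype α]

/-- The expectation of `F` under the mass function `p`; a finite sum, in keeping with the
representation of laws by real-valued functions on finite types. -/
def expect (p F : α → ℝ) : ℝ :=
  ∑ a, p a * F a

/-- The probability of the event `S` under the mass function `p`. -/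
def prob (p : α → ℝ) (S : Set α) : ℝ :=
  expect p (S.indicator 1)

/-- The law of `g a` when `a` has law `p`. -/
def pushforward (g : α → β) (p : α → ℝ) (b : β) : ℝ :=
  ∑ a with g a = b, p a

lemma le_pushforward {p : α → ℝ} (hp : ∀ a, 0 ≤ p a) (g : α → β) (a : α) :
    p a ≤ pushforward g p (g a) :=
  Finset.single_le_sum (f := p) (fun a _ => hp a) (by simp)

lemma expect_add (p F G : α → ℝ) :
    expect p (fun a => F a + G a) = expect p F + expect p G := by
  simp only [expect, mul_add, Finset.sum_add_distrib]

lemma expect_sub (p F G : α → ℝ) :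
    expect p (fun a => F a - G a) = expect p F - expect p G := by
  simp only [expect, mul_sub, Finset.sum_sub_distrib]

lemma expect_const_mul (p : α → ℝ) (c : ℝ) (F : α → ℝ) :
    expect p (fun a => c * F a) = c * expect p F := by
  simp only [expect, Finset.mul_sum, mul_left_comm c]

lemma expect_sum {ι : Type} (p : α → ℝ) (s : Finset ι) (F : ι → α → ℝ) :
    expect p (fun a => ∑ i ∈ s, F i a) = ∑ i ∈ s, expect p (F i) := by
  simp only [expect, Finset.mul_sum]
  exact Finset.sum_comm

lemma expect_mono {p F G : α → ℝ} (hp : ∀ a, 0 ≤ p a) (hFG : ∀ a, F a ≤ G a) :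
    expect p F ≤ expect p G :=
  Finset.sum_le_sum fun a _ => mul_le_mul_of_nonneg_left (hFG a) (hp a)

lemma ext_of_expect {p r : α → ℝ} (h : ∀ F, expect p F = expect r F) : p = r := by
  funext a
  simpa [expect, Pi.single_apply] using h (Pi.single a 1)

variable [Fintype β]

lemma expect_comm (p : α → ℝ) (r : β → ℝ) (F : α → β → ℝ) :
    expect p (fun a => expect r (F a)) = expect r fun b => expect p fun a => F a b := by
  simp only [expect, Finset.mul_sum, mul_left_comm (p _)]
  exact Finset.sum_comm

lemma expect_pushforward (g : α → β) (p : α → ℝ) (F : β → ℝ) :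
    expect (pushforward g p) F = expect p (F ∘ g) := by
  simp only [expect, pushforward, Finset.sum_mul]
  rw [← Finset.sum_fiberwise Finset.univ g]
  refine Finset.sum_congr rfl fun b _ => Finset.sum_congr rfl fun a ha => ?_
  rw [Function.comp_apply, (Finset.mem_filter.mp ha).2]

lemma expect_margX (p : α × β → ℝ) (F : α → ℝ) :
    expect (margX p) F = expect p (F ∘ Prod.fst) := by
  simp only [expect, margX, Finset.sum_mul, Fintype.sum_prod_type, Function.comp_apply]

lemma expect_margY (p : α × β → ℝ) (F : β → ℝ) :
    expect (margY p) F = expect p (F ∘ Prod.snd) := by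
  simp only [expect, margY, Finset.sum_mul, Fintype.sum_prod_type_right, Function.comp_apply]

lemma margX_pushforward {γ δ : Type} [Finite γ] [Fintype δ] (g : α → γ) (h : β → δ)
    (p : α × β → ℝ) : margX (pushforward (Prod.map g h) p) = pushforward g (margX p) :=
  have := Fintype.ofFinite γ
  ext_of_expect fun F => by
    simp only [expect_margX, expect_pushforward]
    rfl

lemma margY_pushforward {γ δ : Type} [Fintype γ] [Finite δ] (g : α → γ) (h : β → δ)
    (p : α × β → ℝ) : margY (pushforward (Prod.map g h) p) = pushforward h (margY p) :=
  have := Fintype.ofFinite δ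
  ext_of_expect fun F => by
    simp only [expect_margY, expect_pushforward]
    rfl

lemma pushforward_pushforward {γ : Type} [Finite γ] (g : α → β) (h : β → γ) (p : α → ℝ) :
    pushforward h (pushforward g p) = pushforward (h ∘ g) p :=
  have := Fintype.ofFinite γ
  ext_of_expect fun F => by simp only [expect_pushforward, Function.comp_assoc]

namespace IsPmf

variable {p : α → ℝ}

lemma expect_const (hp : IsPmf p) (c : ℝ) : expect p (fun _ => c) = c := by
  rw [expect, ← Finset.sum_mul, hp.2, one_mul]

lemma nonempty (hp : IsPmf p) : Nonempty α := by
  by_contra h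
  rw [not_nonempty_iff] at h
  simpa using hp.2

lemma exists_le_expect (hp : IsPmf p) (F : α → ℝ) : ∃ a, F a ≤ expect p F := by
  have := hp.nonempty
  obtain ⟨a, ha⟩ := Finite.exists_min F
  exact ⟨a, (hp.expect_const (F a)).symm.trans_le (expect_mono hp.1 ha)⟩

lemma pushforward (hp : IsPmf p) (g : α → β) : IsPmf (pushforward g p) :=
  ⟨fun _ => Finset.sum_nonneg fun a _ => hp.1 a, (Finset.sum_fiberwise _ g p).trans hp.2⟩

lemma margX {p : α × β → ℝ} (hp : IsPmf p) : IsPmf (margX p) :=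
  ⟨fun _ => Finset.sum_nonneg fun _ _ => hp.1 _, (Fintype.sum_prod_type p).symm.trans hp.2⟩

lemma margY {p : α × β → ℝ} (hp : IsPmf p) : IsPmf (margY p) :=
  ⟨fun _ => Finset.sum_nonneg fun _ _ => hp.1 _, (Fintype.sum_prod_type_right p).symm.trans hp.2⟩

end IsPmf

lemma prob_mono_of_pos {p : α → ℝ} (hp : ∀ a, 0 ≤ p a) {S T : Set α}
    (h : ∀ a ∈ S, 0 < p a → a ∈ T) : prob p S ≤ prob p T := by
  refine Finset.sum_le_sum fun a _ => ?_
  rcases (hp a).eq_or_lt with ha | ha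
  · rw [← ha, zero_mul, zero_mul]
  · refine mul_le_mul_of_nonneg_left ?_ ha.le
    by_cases haS : a ∈ S
    · simp [haS, h a haS ha]
    · simpa [haS] using Set.indicator_nonneg (s := T) (f := 1) (by simp) a

lemma prob_mono {p : α → ℝ} (hp : ∀ a, 0 ≤ p a) {S T : Set α} (h : S ⊆ T) :
    prob p S ≤ prob p T :=
  prob_mono_of_pos hp fun _ ha _ => h ha

lemma prob_union_le {p : α → ℝ} (hp : ∀ a, 0 ≤ p a) (S T : Set α) :
    prob p (S ∪ T) ≤ prob p S + prob p T := by
  rw [prob, prob, prob, ← expect_add]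
  refine expect_mono hp fun a => ?_
  by_cases hS : a ∈ S <;> by_cases hT : a ∈ T <;> simp [hS, hT]

lemma prob_iUnion_le {ι : Type} [Fintype ι] {p : α → ℝ} (hp : ∀ a, 0 ≤ p a) (S : ι → Set α) :
    prob p (⋃ i, S i) ≤ ∑ i, prob p (S i) := by
  simp only [prob]
  rw [← expect_sum]
  refine expect_mono hp fun a => ?_
  have hnonneg : ∀ i ∈ Finset.univ, 0 ≤ (S i).indicator (1 : α → ℝ) a :=
    fun i _ => Set.indicator_nonneg (by simp) a
  by_cases ha : a ∈ ⋃ i, S i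
  · obtain ⟨i, hi⟩ := Set.mem_iUnion.mp ha
    simpa [ha, hi] using Finset.single_le_sum hnonneg (Finset.mem_univ i)
  · simpa [ha] using Finset.sum_nonneg hnonneg

lemma prob_compl {p : α → ℝ} (hp : IsPmf p) (S : Set α) : prob p Sᶜ = 1 - prob p S := by
  rw [prob, prob, Set.indicator_compl, ← hp.expect_const 1, ← expect_sub]
  rfl

lemma prob_le_one {p : α → ℝ} (hp : IsPmf p) (S : Set α) : prob p S ≤ 1 :=
  (expect_mono hp.1 <| Set.indicator_le_self' (by simp)).trans_eq (hp.expect_const 1)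

lemma prob_le_expect_div {p F : α → ℝ} (hp : ∀ a, 0 ≤ p a) (hF : ∀ a, 0 ≤ F a) {c : ℝ}
    (hc : 0 < c) : prob p {a | c ≤ F a} ≤ expect p F / c := by
  rw [le_div_iff₀' hc, prob, ← expect_const_mul]
  refine expect_mono hp fun a => ?_
  by_cases ha : c ≤ F a
  · simp [ha]
  · simpa [ha] using hF a

lemma prob_not_eq_sum_ite (p : α → ℝ) (Q : α → Prop) [DecidablePred Q] :
    prob p {a | ¬ Q a} = ∑ a, if Q a then 0 else p a := by
  refine Finset.sum_congr rfl fun a _ => ?_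
  by_cases ha : Q a <;> simp [ha]

lemma expect_le_add_mul_prob {p F : α → ℝ} (hp : IsPmf p) {S : Set α} {d D : ℝ}
    (hS : ∀ a ∉ S, F a ≤ d) (hF : ∀ a, F a ≤ d + D) : expect p F ≤ d + D * prob p S := by
  calc expect p F ≤ expect p (fun a => d + D * S.indicator 1 a) := expect_mono hp.1 fun a => ?_
    _ = d + D * prob p S := by rw [expect_add, expect_const_mul, hp.expect_const, prob]
  by_cases ha : a ∈ S
  · simpa [ha] using hF a
  · simpa [ha] using hS a ha

end Expectation

section Information

variable {α β γ δ : Type} [Fintype α] [Fintype β] [Fintype γ] [Fintype δ] {p : α × β → ℝ}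

/-- The density of a joint law with respect to the product of its marginals; outside the support
of that product it is `0`, by the convention `x / 0 = 0`. -/
def likelihoodRatio (p : α × β → ℝ) (t : α × β) : ℝ :=
  p t / (margX p t.1 * margY p t.2)

/-- The information density, whose mean is the mutual information. -/
def infoDensity (p : α × β → ℝ) (t : α × β) : ℝ :=
  Real.logb 2 (likelihoodRatio p t)

lemma margX_mul_margY_pos (hp : ∀ t, 0 ≤ p t) {t : α × β} (ht : 0 < p t) :
    0 < margX p t.1 * margY p t.2 :=
  mul_pos (ht.trans_le (le_margX hp t)) (ht.trans_le (le_margY hp t))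

lemma likelihoodRatio_nonneg (hp : ∀ t, 0 ≤ p t) (t : α × β) : 0 ≤ likelihoodRatio p t :=
  div_nonneg (hp t) (mul_nonneg ((hp t).trans (le_margX hp t)) ((hp t).trans (le_margY hp t)))

lemma likelihoodRatio_pos (hp : ∀ t, 0 ≤ p t) {t : α × β} (ht : 0 < p t) :
    0 < likelihoodRatio p t :=
  div_pos ht (margX_mul_margY_pos hp ht)

lemma rpow_infoDensity (hp : ∀ t, 0 ≤ p t) {t : α × β} (ht : 0 < p t) :
    (2 : ℝ) ^ infoDensity p t = likelihoodRatio p t :=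
  Real.rpow_logb two_pos (by norm_num) (likelihoodRatio_pos hp ht)

lemma margX_mul_margY_mul_likelihoodRatio (hp : ∀ t, 0 ≤ p t) (t : α × β) :
    margX p t.1 * margY p t.2 * likelihoodRatio p t = p t := by
  rcases (hp t).eq_or_lt with ht | ht
  · simp [likelihoodRatio, ← ht]
  · exact mul_div_cancel₀ _ (margX_mul_margY_pos hp ht).ne'

lemma expect_expect_likelihoodRatio (hp : IsPmf p) :
    expect (margX p) (fun a => expect (margY p) fun b => likelihoodRatio p (a, b)) = 1 := by
  simp only [expect, Finset.mul_sum, ← mul_assoc]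
  rw [← Fintype.sum_prod_type', ← hp.2]
  exact Finset.sum_congr rfl fun t _ => margX_mul_margY_mul_likelihoodRatio hp.1 t

lemma H2_eq_expect (p : α → ℝ) : H2 p = expect p fun a => -Real.logb 2 (p a) := by
  simp only [H2, expect, mul_neg, Finset.sum_neg_distrib]

lemma expect_infoDensity (hp : IsPmf p) : expect p (infoDensity p) = MI p := by
  change _ = H2 (margX p) + H2 (margY p) - H2 p
  rw [H2_eq_expect, H2_eq_expect, H2_eq_expect, expect_margX, expect_margY, ← expect_add,
    ← expect_sub]
  refine Finset.sum_congr rfl fun t _ => ?_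
  rcases (hp.1 t).eq_or_lt with ht | ht
  · rw [← ht, zero_mul, zero_mul]
  · have hX := ht.trans_le (le_margX hp.1 t)
    have hY := ht.trans_le (le_margY hp.1 t)
    rw [infoDensity, likelihoodRatio, Real.logb_div ht.ne' (mul_pos hX hY).ne',
      Real.logb_mul hX.ne' hY.ne']
    simp only [Function.comp_apply]
    ring

lemma expect_nonpos_of_expect_rpow_le_one {p F : α → ℝ} (hp : IsPmf p)
    (h : expect p (fun a => (2 : ℝ) ^ F a) ≤ 1) : expect p F ≤ 0 := by
  have hlog : 0 < Real.log 2 := Real.log_pos one_lt_two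
  have hmean : expect p (fun a => Real.log 2 * F a + 1) ≤ 1 := by
    refine (expect_mono hp.1 fun a => ?_).trans h
    rw [Real.rpow_def_of_pos two_pos]
    exact Real.add_one_le_exp _
  rw [expect_add, expect_const_mul, hp.expect_const] at hmean
  nlinarith

-- Under `p`, the ratio of the two densities has mean at most `1`: weighting by `p` cancels its
-- density and leaves the mean of the image density under a product law. Jensen's inequality for
-- `logb` then compares the mutual informations.
lemma MI_pushforward_le (hp : IsPmf p) (g : α → γ) (h : β → δ) :
    MI (pushforward (Prod.map g h) p) ≤ MI p := by
  set r := pushforward (Prod.map g h) p with hr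
  have hrp : IsPmf r := hp.pushforward _
  rw [← expect_infoDensity hp, ← expect_infoDensity hrp, ← sub_nonpos]
  nth_rw 1 [hr]
  rw [expect_pushforward, ← expect_sub]
  apply expect_nonpos_of_expect_rpow_le_one hp
  calc expect p (fun t => (2 : ℝ) ^ ((infoDensity r ∘ Prod.map g h) t - infoDensity p t))
      ≤ ∑ t : α × β, margX p t.1 * margY p t.2 * likelihoodRatio r (Prod.map g h t) := by
        refine Finset.sum_le_sum fun t _ => ?_
        rcases (hp.1 t).eq_or_lt with ht | ht
        · rw [← ht, zero_mul]
          exact mul_nonneg (mul_nonneg (hp.margX.1 _) (hp.margY.1 _))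
            (likelihoodRatio_nonneg hrp.1 _)
        · have hrt : 0 < r (Prod.map g h t) := ht.trans_le (le_pushforward hp.1 _ t)
          simp only [Function.comp_apply]
          rw [Real.rpow_sub two_pos, rpow_infoDensity hp.1 ht, rpow_infoDensity hrp.1 hrt]
          nth_rw 1 [← margX_mul_margY_mul_likelihoodRatio hp.1 t]
          rw [mul_assoc, mul_div_cancel₀ _ (likelihoodRatio_pos hp.1 ht).ne']
    _ = expect (margX p) (fun a => expect (margY p) fun b => likelihoodRatio r (g a, h b)) := by
        simp only [expect, Finset.mul_sum, ← mul_assoc, Fintype.sum_prod_type, Prod.map_apply]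
    _ = expect (margX r) (fun c => expect (margY r) fun d => likelihoodRatio r (c, d)) := by
        simp only [hr, margX_pushforward, margY_pushforward, expect_pushforward]
        rfl
    _ = 1 := expect_expect_likelihoodRatio hrp
    _ ≤ 1 := le_rfl

lemma MI_nonneg (hp : IsPmf p) : 0 ≤ MI p := by
  refine le_trans (le_of_eq ?_) (MI_pushforward_le hp (fun _ => ()) fun _ => ())
  have hunit : ∀ r : Unit × Unit → ℝ, IsPmf r → 0 = MI r := by
    intro r hr
    have hone : r ((), ()) = 1 := by simpa [Fintype.sum_prod_type] using hr.2
    simp [MI, H2, hone]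
  exact hunit _ (hp.pushforward _)

end Information

section Independence

variable {α β ι : Type} [Fintype α] [Fintype ι]

/-- The joint law of a family of independent letters of law `p`. -/
def iidPmf (p : α → ℝ) (a : ι → α) : ℝ :=
  ∏ i, p (a i)

/-- The variance of `F` under `p`. -/
def variance (p F : α → ℝ) : ℝ :=
  expect p fun a => (F a - expect p F) ^ 2

variable [DecidableEq ι] {p : α → ℝ}

lemma expect_iidPmf_prod (p : α → ℝ) (F : ι → α → ℝ) :
    expect (iidPmf p) (fun a => ∏ i, F i (a i)) = ∏ i, expect p (F i) := by
  simp only [expect, iidPmf, ← Finset.prod_mul_distrib]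
  exact (Fintype.prod_sum fun i x => p x * F i x).symm

lemma IsPmf.iidPmf (hp : IsPmf p) : IsPmf (iidPmf p : (ι → α) → ℝ) := by
  refine ⟨fun a => Finset.prod_nonneg fun i _ => hp.1 (a i), ?_⟩
  have := expect_iidPmf_prod p fun (_ : ι) _ => 1
  simpa [expect, hp.2] using this

lemma expect_iidPmf_prod_mem (hp : IsPmf p) (s : Finset ι) (F : ι → α → ℝ) :
    expect (iidPmf p) (fun a => ∏ i ∈ s, F i (a i)) = ∏ i ∈ s, expect p (F i) := by
  have h := expect_iidPmf_prod p fun i x => if i ∈ s then F i x else 1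
  have hfactor : ∀ i, expect p (fun x => if i ∈ s then F i x else 1) =
      if i ∈ s then expect p (F i) else 1 := by
    intro i
    split_ifs
    · rfl
    · exact hp.expect_const 1
  simpa only [hfactor, Finset.prod_ite_mem, Finset.univ_inter] using h

lemma expect_iidPmf_eval (hp : IsPmf p) (i : ι) (F : α → ℝ) :
    expect (iidPmf p) (fun a => F (a i)) = expect p F := by
  simpa using expect_iidPmf_prod_mem hp {i} fun _ => F

lemma expect_iidPmf_eval_mul_eval (hp : IsPmf p) {i j : ι} (hij : i ≠ j) (F G : α → ℝ) :
    expect (iidPmf p) (fun a => F (a i) * G (a j)) = expect p F * expect p G := by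
  simpa [Finset.prod_pair hij, hij.symm] using
    expect_iidPmf_prod_mem hp {i, j} fun k => if k = i then F else G

lemma prob_iidPmf_forall_mem (p : α → ℝ) (S : Set α) :
    prob (iidPmf p) {a : ι → α | ∀ i, a i ∈ S} = prob p S ^ Fintype.card ι := by
  have h := expect_iidPmf_prod p fun (_ : ι) => S.indicator 1
  rw [Finset.prod_const, Finset.card_univ] at h
  rw [prob, prob, ← h]
  congr 1 with a
  simp [Set.indicator_apply, Fintype.prod_boole]

lemma prob_iidPmf_eval_eq_eval (hp : IsPmf p) {i j : ι} (hij : i ≠ j) :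
    prob (iidPmf p) {a : ι → α | a i = a j} = ∑ x, p x ^ 2 := by
  have hsplit : ∀ a : ι → α, {a : ι → α | a i = a j}.indicator (1 : (ι → α) → ℝ) a =
      ∑ x, (if a i = x then 1 else 0) * if a j = x then 1 else 0 := by
    intro a
    simp [Set.indicator_apply, eq_comm]
  rw [prob, show {a : ι → α | a i = a j}.indicator (1 : (ι → α) → ℝ) = _ from funext hsplit,
    expect_sum]
  refine Finset.sum_congr rfl fun x _ => ?_
  rw [expect_iidPmf_eval_mul_eval hp hij (fun y => if y = x then 1 else 0) fun y =>
    if y = x then 1 else 0]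
  simp [expect, sq]

lemma expect_iidPmf_sum_sq (hp : IsPmf p) {F : α → ℝ} (hF : expect p F = 0) :
    expect (iidPmf p) (fun a : ι → α => (∑ i, F (a i)) ^ 2) =
      Fintype.card ι * expect p fun x => F x ^ 2 := by
  have hcov : ∀ i j : ι, expect (iidPmf p) (fun a => F (a i) * F (a j)) =
      if i = j then expect p fun x => F x ^ 2 else 0 := by
    intro i j
    split_ifs with hij
    · subst hij
      simpa only [sq] using expect_iidPmf_eval hp i fun x => F x * F x
    · rw [expect_iidPmf_eval_mul_eval hp hij, hF, zero_mul]
  simp only [sq (∑ _, _), Finset.sum_mul_sum, expect_sum, hcov, Finset.sum_ite_eq,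
    Finset.mem_univ, if_true, Finset.sum_const, Finset.card_univ, nsmul_eq_mul]

lemma prob_iidPmf_lt_sum_le [Nonempty ι] (hp : IsPmf p) (F : α → ℝ) {η : ℝ} (hη : 0 < η) :
    prob (iidPmf p) {a : ι → α | Fintype.card ι * (expect p F + η) < ∑ i, F (a i)} ≤
      variance p F / (η ^ 2 * Fintype.card ι) := by
  set centred : α → ℝ := fun x => F x - expect p F
  have hcentred : expect p centred = 0 := by
    rw [expect_sub, hp.expect_const, sub_self]
  calc prob (iidPmf p) {a : ι → α | Fintype.card ι * (expect p F + η) < ∑ i, F (a i)}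
      ≤ prob (iidPmf p) {a | (Fintype.card ι * η) ^ 2 ≤ (∑ i : ι, centred (a i)) ^ 2} := by
        refine prob_mono hp.iidPmf.1 fun a ha => ?_
        have hsum : ∑ i, centred (a i) = ∑ i, F (a i) - Fintype.card ι * expect p F := by
          simp [centred, Finset.sum_sub_distrib]
        rw [Set.mem_ofPred_eq] at ha ⊢
        refine pow_le_pow_left₀ (by positivity) ?_ 2
        linarith
    _ ≤ expect (iidPmf p) (fun a => (∑ i : ι, centred (a i)) ^ 2) / (Fintype.card ι * η) ^ 2 :=
        prob_le_expect_div hp.iidPmf.1 (fun _ => sq_nonneg _) (by positivity)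
    _ = variance p F / (η ^ 2 * Fintype.card ι) := by
        rw [expect_iidPmf_sum_sq hp hcentred, ← variance]
        field_simp

lemma margY_iid {γ : Type} (p : α × γ → ℝ) (n : ℕ) : margY (iid p n) = iidPmf (margY p) :=
  funext fun b => (Fintype.prod_sum fun i a => p (a, b i)).symm

variable [Fintype β]

lemma expect_iid (p : α × β → ℝ) {n : ℕ} (F : (Fin n → α) × (Fin n → β) → ℝ) :
    expect (iid p n) F =
      expect (iidPmf p) fun t : Fin n → α × β => F (fun i => (t i).1, fun i => (t i).2) :=
  (Fintype.sum_equiv (Equiv.arrowProdEquivProdArrow (Fin n) (fun _ => α) fun _ => β)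
    _ _ fun _ => rfl).symm

lemma IsPmf.iid {p : α × β → ℝ} (hp : IsPmf p) (n : ℕ) : IsPmf (iid p n) := by
  refine ⟨fun t => Finset.prod_nonneg fun i _ => hp.1 _, ?_⟩
  simpa [expect, hp.iidPmf.2] using expect_iid p (n := n) fun _ => 1

lemma margX_iid {γ : Type} (p : γ × β → ℝ) (n : ℕ) : margX (iid p n) = iidPmf (margX p) :=
  funext fun a => (Fintype.prod_sum fun i b => p (a i, b)).symm

end Independence

section RandomBinning

variable {S U V Z ι μ : Type}

/-- The position of a codeword of `C` lying in `A`; an arbitrary one if `C` misses `A`. -/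
def selectIndex [Nonempty ι] (A : Set Z) (C : ι → Z) : ι :=
  Classical.epsilon fun k => C k ∈ A

/-- The message of the binning encoder: the bin, under `B`, of a codeword related to the source
outcome `s` by `A`. -/
def binEncode [Nonempty ι] (A : Set (S × Z)) (C : ι → Z) (B : ι → μ) (s : S) : μ :=
  B (selectIndex {z | (s, z) ∈ A} C)

/-- The output of a binning decoder: a codeword of the bin `m` that passes the test `T`; an
arbitrary codeword if there is none. -/
def binDecode [Nonempty ι] (T : Set Z) (C : ι → Z) (B : ι → μ) (m : μ) : Z :=
  C (Classical.epsilon fun k => B k = m ∧ C k ∈ T)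

/-- The bin of the codeword `k` contains a competitor that also passes the test `T`. -/
def Collides (T : Set Z) (C : ι → Z) (B : ι → μ) (k : ι) : Prop :=
  ∃ k' ≠ k, B k' = B k ∧ C k' ∈ T

/-- The source outcomes on which two decoders, reading the message `f s` and their own side
information `u s` and `v s`, fail to agree on a word related to `s` by `A`. -/
def failureSet (A : Set (S × Z)) (u : S → U) (v : S → V) (f : S → μ) (gU : μ → U → Z)
    (gV : μ → V → Z) : Set S :=
  {s | ¬ ((s, gU (f s) (u s)) ∈ A ∧ gV (f s) (v s) = gU (f s) (u s))}

lemma failureSet_anti {A A' : Set (S × Z)} (h : A ⊆ A') (u : S → U) (v : S → V)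
    (f : S → μ) (gU : μ → U → Z) (gV : μ → V → Z) :
    failureSet A' u v f gU gV ⊆ failureSet A u v f gU gV :=
  fun _ hs hgood => hs ⟨h hgood.1, hgood.2⟩

lemma binDecode_eq_of_not_collides [Nonempty ι] {T : Set Z} {C : ι → Z} {B : ι → μ} {k : ι}
    (hk : C k ∈ T) (h : ¬ Collides T C B k) : binDecode T C B (B k) = C k := by
  have hspec := Classical.epsilon_spec (p := fun k' => B k' = B k ∧ C k' ∈ T) ⟨k, rfl, hk⟩
  by_contra hne
  exact h ⟨_, fun heq => hne (congrArg C heq), hspec⟩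

lemma collides_of_mem_failureSet [Nonempty ι] {A : Set (S × Z)} {u : S → U} {v : S → V}
    {TU : U → Set Z} {TV : V → Set Z} (hU : ∀ t ∈ A, t.2 ∈ TU (u t.1))
    (hV : ∀ t ∈ A, t.2 ∈ TV (v t.1)) {C : ι → Z} {B : ι → μ} {s : S}
    (hs : s ∈ failureSet A u v (binEncode A C B) (fun m y => binDecode (TU y) C B m)
      fun m x => binDecode (TV x) C B m) :
    (∀ k, C k ∈ {z | (s, z) ∈ A}ᶜ) ∨ Collides (TU (u s)) C B (selectIndex {z | (s, z) ∈ A} C) ∨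
      Collides (TV (v s)) C B (selectIndex {z | (s, z) ∈ A} C) := by
  by_contra! h
  obtain ⟨⟨k, hk⟩, hcU, hcV⟩ := h
  have hsel : (s, C (selectIndex {z | (s, z) ∈ A} C)) ∈ A :=
    Classical.epsilon_spec (p := fun k => C k ∈ {z | (s, z) ∈ A}) ⟨k, not_not.mp hk⟩
  have hselU : C (selectIndex {z | (s, z) ∈ A} C) ∈ TU (u s) := hU _ hsel
  have hselV : C (selectIndex {z | (s, z) ∈ A} C) ∈ TV (v s) := hV _ hsel
  have hdU := binDecode_eq_of_not_collides hselU hcU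
  have hdV := binDecode_eq_of_not_collides hselV hcV
  refine hs ⟨?_, ?_⟩
  · simpa only [binEncode, hdU] using hsel
  · exact hdV.trans hdU.symm

variable [Fintype ι] [DecidableEq ι] [Fintype μ]

/-- The uniform law on a finite type. -/
def uniformPmf (μ : Type) [Fintype μ] (_ : μ) : ℝ :=
  (Fintype.card μ : ℝ)⁻¹

lemma isPmf_uniformPmf (μ : Type) [Fintype μ] [Nonempty μ] : IsPmf (uniformPmf μ) :=
  ⟨fun _ => by unfold uniformPmf; positivity, by simp [uniformPmf]⟩

lemma prob_uniformPmf_collides_le [Nonempty μ] (T : Set Z) (C : ι → Z) (k : ι) :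
    prob (iidPmf (uniformPmf μ)) {B | Collides T C B k} ≤
      (Fintype.card μ : ℝ)⁻¹ * ∑ k', T.indicator 1 (C k') := by
  have hunif := isPmf_uniformPmf μ
  calc prob (iidPmf (uniformPmf μ)) {B | Collides T C B k}
      ≤ prob (iidPmf (uniformPmf μ)) (⋃ k', {B | k' ≠ k ∧ B k' = B k ∧ C k' ∈ T}) :=
        prob_mono hunif.iidPmf.1 fun B ⟨k', hk'⟩ => Set.mem_iUnion.mpr ⟨k', hk'⟩
    _ ≤ ∑ k', prob (iidPmf (uniformPmf μ)) {B | k' ≠ k ∧ B k' = B k ∧ C k' ∈ T} :=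
        prob_iUnion_le hunif.iidPmf.1 _
    _ ≤ ∑ k', (Fintype.card μ : ℝ)⁻¹ * T.indicator 1 (C k') := by
        refine Finset.sum_le_sum fun k' _ => ?_
        by_cases hk' : k' ≠ k ∧ C k' ∈ T
        · refine (prob_mono hunif.iidPmf.1 (T := {B | B k' = B k}) fun B hB => hB.2.1).trans ?_
          rw [prob_iidPmf_eval_eq_eval hunif hk'.1]
          simp [uniformPmf, hk'.2, sq]
        · have hempty : {B : ι → μ | k' ≠ k ∧ B k' = B k ∧ C k' ∈ T} = ∅ :=
            Set.eq_empty_of_forall_notMem fun B hB => hk' ⟨hB.1, hB.2.2⟩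
          rw [hempty, prob, Set.indicator_empty']
          simp only [expect, Pi.zero_apply, mul_zero, Finset.sum_const_zero]
          exact mul_nonneg (by positivity) (Set.indicator_nonneg (by simp) _)
    _ = (Fintype.card μ : ℝ)⁻¹ * ∑ k', T.indicator 1 (C k') := (Finset.mul_sum _ _ _).symm

variable [Fintype Z]

lemma expect_iidPmf_sum_indicator {r : Z → ℝ} (hr : IsPmf r) (T : Set Z) :
    expect (iidPmf r) (fun C : ι → Z => ∑ k, T.indicator 1 (C k)) =
      Fintype.card ι * prob r T := by
  simp only [expect_sum, expect_iidPmf_eval hr _ (T.indicator 1), Finset.sum_const,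
    Finset.card_univ, nsmul_eq_mul, prob]

lemma expect_prob_failureSet_le [Nonempty ι] [Nonempty μ] {r : Z → ℝ} (hr : IsPmf r)
    {A : Set (S × Z)} {u : S → U} {v : S → V} {TU : U → Set Z} {TV : V → Set Z}
    (hU : ∀ t ∈ A, t.2 ∈ TU (u t.1)) (hV : ∀ t ∈ A, t.2 ∈ TV (v t.1)) (s : S) :
    expect (iidPmf r) (fun C : ι → Z => prob (iidPmf (uniformPmf μ)) {B : ι → μ |
      s ∈ failureSet A u v (binEncode A C B) (fun m y => binDecode (TU y) C B m)
        fun m x => binDecode (TV x) C B m}) ≤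
      (1 - prob r {z | (s, z) ∈ A}) ^ Fintype.card ι +
        Fintype.card ι / Fintype.card μ * (prob r (TU (u s)) + prob r (TV (v s))) := by
  have hunif := isPmf_uniformPmf μ
  set Aₛ : Set Z := {z | (s, z) ∈ A}
  set collisions : Set Z → (ι → Z) → ℝ := fun T C =>
    (Fintype.card μ : ℝ)⁻¹ * ∑ k, T.indicator 1 (C k)
  have hfixed : ∀ C : ι → Z, prob (iidPmf (uniformPmf μ)) {B : ι → μ |
      s ∈ failureSet A u v (binEncode A C B) (fun m y => binDecode (TU y) C B m)
        fun m x => binDecode (TV x) C B m} ≤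
      {C : ι → Z | ∀ k, C k ∈ Aₛᶜ}.indicator 1 C +
        (collisions (TU (u s)) C + collisions (TV (v s)) C) := by
    intro C
    refine (prob_mono hunif.iidPmf.1 fun _ => collides_of_mem_failureSet hU hV).trans <|
      (prob_union_le hunif.iidPmf.1 _ _).trans (add_le_add ?_ ?_)
    · exact (hunif.iidPmf.expect_const ({C : ι → Z | ∀ k, C k ∈ Aₛᶜ}.indicator 1 C)).le
    · exact (prob_union_le hunif.iidPmf.1 _ _).trans <| add_le_add
        (prob_uniformPmf_collides_le _ C _) (prob_uniformPmf_collides_le _ C _)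
  have hcollisions : ∀ T : Set Z, expect (iidPmf r) (collisions T) =
      Fintype.card ι / Fintype.card μ * prob r T := fun T => by
    rw [expect_const_mul, expect_iidPmf_sum_indicator hr]
    ring
  refine (expect_mono hr.iidPmf.1 hfixed).trans_eq ?_
  rw [expect_add, expect_add, hcollisions, hcollisions, ← prob_compl hr, mul_add]
  exact congrArg (· + _) (prob_iidPmf_forall_mem r Aₛᶜ)

theorem exists_binning_code [Fintype S] (ι μ : Type) [Fintype ι] [Nonempty ι] [Fintype μ]
    [Nonempty μ] {q : S → ℝ} (hq : IsPmf q) {r : Z → ℝ} (hr : IsPmf r) {A : Set (S × Z)}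
    {u : S → U} {v : S → V} {TU : U → Set Z} {TV : V → Set Z} (hU : ∀ t ∈ A, t.2 ∈ TU (u t.1))
    (hV : ∀ t ∈ A, t.2 ∈ TV (v t.1)) :
    ∃ (f : S → μ) (gU : μ → U → Z) (gV : μ → V → Z), prob q (failureSet A u v f gU gV) ≤
      expect q fun s => (1 - prob r {z | (s, z) ∈ A}) ^ Fintype.card ι +
        Fintype.card ι / Fintype.card μ * (prob r (TU (u s)) + prob r (TV (v s))) := by
  set failure : (ι → Z) → (ι → μ) → Set S := fun C B =>
    failureSet A u v (binEncode A C B) (fun m y => binDecode (TU y) C B m)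
      fun m x => binDecode (TV x) C B m
  obtain ⟨C, hC⟩ := hr.iidPmf.exists_le_expect fun C : ι → Z =>
    expect (iidPmf (uniformPmf μ)) fun B => prob q (failure C B)
  obtain ⟨B, hB⟩ := (isPmf_uniformPmf μ).iidPmf.exists_le_expect fun B => prob q (failure C B)
  have hswap : expect (iidPmf r) (fun C : ι → Z =>
        expect (iidPmf (uniformPmf μ)) fun B => prob q (failure C B)) =
      expect q fun s => expect (iidPmf r) fun C =>
        prob (iidPmf (uniformPmf μ)) {B | s ∈ failure C B} := by
    simp only [prob, expect_comm _ q]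
    rfl
  refine ⟨_, _, _, hB.trans (hC.trans (hswap.trans_le ?_))⟩
  exact expect_mono hq.1 fun s => expect_prob_failureSet_le hr hU hV s

end RandomBinning

section OneShot

variable {S U V Z : Type} [Fintype S] [Fintype Z]

lemma one_sub_pow_le {x y α : ℝ} (hx0 : 0 ≤ x) (hx1 : x ≤ 1) (hxy : x * y ≤ α) (hα : α ≤ 1)
    (n : ℕ) : (1 - α) ^ n ≤ 1 - x + x * Real.exp (-(n * y)) := by
  calc (1 - α) ^ n ≤ Real.exp (-α) ^ n :=
        pow_le_pow_left₀ (sub_nonneg.mpr hα) (Real.one_sub_le_exp_neg α) n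
    _ = Real.exp (-(n * α)) := by rw [← Real.exp_nat_mul, mul_neg]
    _ ≤ Real.exp ((1 - x) * 0 + x * -(n * y)) := by
        refine Real.exp_le_exp.mpr ?_
        nlinarith [mul_le_mul_of_nonneg_left hxy n.cast_nonneg]
    _ ≤ (1 - x) * Real.exp 0 + x * Real.exp (-(n * y)) :=
        convexOn_exp.2 (Set.mem_univ _) (Set.mem_univ _) (sub_nonneg.mpr hx1) hx0
          (sub_add_cancel 1 x)
    _ = 1 - x + x * Real.exp (-(n * y)) := by rw [Real.exp_zero, mul_one]

lemma mul_one_sub_pow_le {w m α a : ℝ} (hw : 0 ≤ w) (hwm : w ≤ m) (ha : 0 < a)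
    (hα : w ≤ a * (m * α)) (hα1 : α ≤ 1) (n : ℕ) :
    m * (1 - α) ^ n ≤ m - w + m * Real.exp (-(n / a)) := by
  rcases (hw.trans hwm).eq_or_lt with hm | hm
  · rw [← hm]
    linarith
  · have hcover : w / m * a⁻¹ ≤ α := by
      rw [← div_eq_mul_inv, div_div, div_le_iff₀ (mul_pos hm ha)]
      linarith
    calc m * (1 - α) ^ n ≤ m * (1 - w / m + w / m * Real.exp (-(n * a⁻¹))) :=
          mul_le_mul_of_nonneg_left (one_sub_pow_le (div_nonneg hw hm.le)
            (div_le_one_of_le₀ hwm hm.le) hcover hα1 n) hm.le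
      _ = m - w + w * Real.exp (-(n / a)) := by
          rw [div_eq_mul_inv (n : ℝ)]
          field_simp
      _ ≤ m - w + m * Real.exp (-(n / a)) := by gcongr

lemma expect_one_sub_pow_le {p : S × Z → ℝ} (hp : IsPmf p) {A : Set (S × Z)} {a : ℝ}
    (ha : 0 < a) (hA : ∀ t ∈ A, p t ≤ a * (margX p t.1 * margY p t.2)) (n : ℕ) :
    expect (margX p) (fun s => (1 - prob (margY p) {z | (s, z) ∈ A}) ^ n) ≤
      prob p Aᶜ + Real.exp (-(n / a)) := by
  set accepted : S → ℝ := fun s => ∑ z, p (s, z) * A.indicator 1 (s, z)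
  have hnonneg : ∀ s, 0 ≤ accepted s := fun s =>
    Finset.sum_nonneg fun z _ => mul_nonneg (hp.1 _) (Set.indicator_nonneg (by simp) _)
  have hle : ∀ s, accepted s ≤ margX p s := fun s =>
    Finset.sum_le_sum fun z _ => mul_le_of_le_one_right (hp.1 _) <|
      Set.indicator_le_self' (by simp) _
  have hcover : ∀ s, accepted s ≤ a * (margX p s * prob (margY p) {z | (s, z) ∈ A}) := by
    intro s
    rw [prob, expect, Finset.mul_sum, Finset.mul_sum]
    refine Finset.sum_le_sum fun z _ => ?_
    by_cases hz : (s, z) ∈ A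
    · simpa [hz] using hA _ hz
    · simp [hz]
  calc expect (margX p) (fun s => (1 - prob (margY p) {z | (s, z) ∈ A}) ^ n)
      ≤ ∑ s, (margX p s - accepted s + margX p s * Real.exp (-(n / a))) :=
        Finset.sum_le_sum fun s _ =>
          mul_one_sub_pow_le (hnonneg s) (hle s) ha (hcover s) (prob_le_one hp.margY _) n
    _ = prob p Aᶜ + Real.exp (-(n / a)) := by
        rw [Finset.sum_add_distrib, Finset.sum_sub_distrib, ← Finset.sum_mul, hp.margX.2, one_mul,
          prob_compl hp, prob, expect, Fintype.sum_prod_type]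

lemma expect_prob_le_inv {q : S → ℝ} {r : Z → ℝ} (hq : ∀ s, 0 ≤ q s) (hr : ∀ z, 0 ≤ r z)
    {L : S → Z → ℝ} (hL : ∀ s z, 0 ≤ L s z) (hmean : expect q (fun s => expect r (L s)) ≤ 1)
    {b : ℝ} (hb : 0 < b) : expect q (fun s => prob r {z | b ≤ L s z}) ≤ b⁻¹ :=
  calc expect q (fun s => prob r {z | b ≤ L s z}) ≤ expect q (fun s => b⁻¹ * expect r (L s)) :=
        expect_mono hq fun s => (prob_le_expect_div hr (hL s) hb).trans_eq (div_eq_inv_mul _ _)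
    _ = b⁻¹ * expect q (fun s => expect r (L s)) := expect_const_mul _ _ _
    _ ≤ b⁻¹ := mul_le_of_le_one_right (inv_pos.mpr hb).le hmean

-- `LU` and `LV` stand for likelihood ratios: their mean under independent source and codeword is at
-- most `1`, so a wrong codeword passes the threshold `bU` with probability at most `bU⁻¹`.
theorem exists_code_prob_failureSet_le {p : S × Z → ℝ} (hp : IsPmf p) {A : Set (S × Z)}
    {a : ℝ} (ha : 0 < a) (hA : ∀ t ∈ A, p t ≤ a * (margX p t.1 * margY p t.2))
    {u : S → U} {v : S → V} {LU : U → Z → ℝ} {LV : V → Z → ℝ} (hLU : ∀ y z, 0 ≤ LU y z)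
    (hLV : ∀ x z, 0 ≤ LV x z)
    (hmeanU : expect (margX p) (fun s => expect (margY p) (LU (u s))) ≤ 1)
    (hmeanV : expect (margX p) (fun s => expect (margY p) (LV (v s))) ≤ 1)
    {bU bV : ℝ} (hbU : 0 < bU) (hbV : 0 < bV) (hAU : ∀ t ∈ A, bU ≤ LU (u t.1) t.2)
    (hAV : ∀ t ∈ A, bV ≤ LV (v t.1) t.2) (K M : ℕ) [NeZero K] [NeZero M] :
    ∃ (f : S → Fin M) (gU : Fin M → U → Z) (gV : Fin M → V → Z),
      prob (margX p) (failureSet A u v f gU gV) ≤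
        prob p Aᶜ + Real.exp (-(K / a)) + K / M * (bU⁻¹ + bV⁻¹) := by
  obtain ⟨f, gU, gV, hfail⟩ := exists_binning_code (Fin K) (Fin M) hp.margX hp.margY
    (u := u) (v := v) (TU := fun y => {z | bU ≤ LU y z}) (TV := fun x => {z | bV ≤ LV x z}) hAU hAV
  refine ⟨f, gU, gV, hfail.trans ?_⟩
  rw [expect_add, expect_const_mul, expect_add, Fintype.card_fin, Fintype.card_fin]
  gcongr
  · exact expect_one_sub_pow_le hp ha hA K
  · exact expect_prob_le_inv hp.margX.1 hp.margY.1 (fun s => hLU (u s)) hmeanU hbU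
  · exact expect_prob_le_inv hp.margX.1 hp.margY.1 (fun s => hLV (v s)) hmeanV hbV

end OneShot

section BlockCoding

variable {S U V Z J : Type} {p : S × Z → ℝ}

lemma pos_of_iid_pos (hp : ∀ t, 0 ≤ p t) {n : ℕ} {t : (Fin n → S) × (Fin n → Z)}
    (ht : 0 < iid p n t) (i : Fin n) : 0 < p (t.1 i, t.2 i) :=
  (hp _).lt_of_ne' (Finset.prod_ne_zero_iff.mp ht.ne' i (Finset.mem_univ i))

variable [Fintype S] [Fintype Z]

/-- The pairs of blocks of positive probability on which no statistic in the family `F` exceeds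
its mean by more than `η` per letter. -/
def typicalSet (p : S × Z → ℝ) (F : J → S × Z → ℝ) (η : ℝ) (n : ℕ) :
    Set ((Fin n → S) × (Fin n → Z)) :=
  {t | 0 < iid p n t ∧ ∀ j, ∑ i, F j (t.1 i, t.2 i) ≤ n * (expect p (F j) + η)}

/-- The statistics controlled by the block code: the information density of source and codeword,
those seen by the two decoders (negated, as they are to be bounded below), and the costs `c`. -/
def codingStatistic [Fintype U] [Fintype V] (p : S × Z → ℝ) (u : S → U) (v : S → V)
    (c : J → S × Z → ℝ) : Fin 3 ⊕ J → S × Z → ℝ :=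
  Sum.elim ![infoDensity p,
    fun t => -infoDensity (pushforward (Prod.map u id) p) (u t.1, t.2),
    fun t => -infoDensity (pushforward (Prod.map v id) p) (v t.1, t.2)] c

lemma prob_compl_typicalSet_le [Fintype J] (hp : IsPmf p) (F : J → S × Z → ℝ) {η : ℝ}
    (hη : 0 < η) (n : ℕ) [NeZero n] :
    prob (iid p n) (typicalSet p F η n)ᶜ ≤ (∑ j, variance p (F j)) / (η ^ 2 * n) := by
  set exceeds : J → Set ((Fin n → S) × (Fin n → Z)) := fun j =>
    {t | n * (expect p (F j) + η) < ∑ i, F j (t.1 i, t.2 i)}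
  have hcheb : ∀ j, prob (iid p n) (exceeds j) ≤ variance p (F j) / (η ^ 2 * n) := by
    intro j
    have h := prob_iidPmf_lt_sum_le (ι := Fin n) hp (F j) hη
    rw [Fintype.card_fin] at h
    exact (expect_iid p _).trans_le h
  calc prob (iid p n) (typicalSet p F η n)ᶜ ≤ prob (iid p n) (⋃ j, exceeds j) := by
        refine prob_mono_of_pos (hp.iid n).1 fun t ht hpos => ?_
        by_contra hnot
        rw [Set.mem_iUnion, not_exists] at hnot
        exact ht ⟨hpos, fun j => not_lt.mp (hnot j)⟩
    _ ≤ ∑ j, prob (iid p n) (exceeds j) := prob_iUnion_le (hp.iid n).1 _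
    _ ≤ ∑ j, variance p (F j) / (η ^ 2 * n) := Finset.sum_le_sum fun j _ => hcheb j
    _ = (∑ j, variance p (F j)) / (η ^ 2 * n) := (Finset.sum_div _ _ _).symm

lemma prod_likelihoodRatio (hp : ∀ t, 0 ≤ p t) {n : ℕ} {t : Fin n → S × Z}
    (ht : ∀ i, 0 < p (t i)) :
    ∏ i, likelihoodRatio p (t i) = (2 : ℝ) ^ ∑ i, infoDensity p (t i) := by
  rw [Real.rpow_sum_of_pos two_pos]
  exact Finset.prod_congr rfl fun i _ => (rpow_infoDensity hp (ht i)).symm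

lemma iid_eq_mul_prod_likelihoodRatio (hp : ∀ t, 0 ≤ p t) {n : ℕ}
    (t : (Fin n → S) × (Fin n → Z)) :
    iid p n t =
      (∏ i, likelihoodRatio p (t.1 i, t.2 i)) * (margX (iid p n) t.1 * margY (iid p n) t.2) := by
  rw [margX_iid, margY_iid, iidPmf, iidPmf, ← Finset.prod_mul_distrib, ← Finset.prod_mul_distrib]
  refine Finset.prod_congr rfl fun i _ => ?_
  rw [mul_comm]
  exact (margX_mul_margY_mul_likelihoodRatio hp (t.1 i, t.2 i)).symm

lemma iid_le_of_mem_typicalSet (hp : IsPmf p) {F : J → S × Z → ℝ} {j : J}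
    (hj : F j = infoDensity p) {η : ℝ} {n : ℕ} {t : (Fin n → S) × (Fin n → Z)}
    (ht : t ∈ typicalSet p F η n) :
    iid p n t ≤ 2 ^ (n * (MI p + η)) * (margX (iid p n) t.1 * margY (iid p n) t.2) := by
  have hsum := ht.2 j
  rw [hj, expect_infoDensity hp] at hsum
  rw [iid_eq_mul_prod_likelihoodRatio hp.1,
    prod_likelihoodRatio hp.1 (t := fun i => (t.1 i, t.2 i)) (pos_of_iid_pos hp.1 ht.1)]
  refine mul_le_mul_of_nonneg_right ?_ ?_
  · exact Real.rpow_le_rpow_of_exponent_le one_le_two hsum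
  · exact mul_nonneg ((hp.iid n).margX.1 _) ((hp.iid n).margY.1 _)

variable [Fintype U]

lemma expect_expect_prod_likelihoodRatio (hp : IsPmf p) (u : S → U) (n : ℕ) :
    expect (margX (iid p n)) (fun s => expect (margY (iid p n)) fun z =>
      ∏ i, likelihoodRatio (pushforward (Prod.map u id) p) (u (s i), z i)) = 1 := by
  set pU := pushforward (Prod.map u id) p
  have hletter : expect (margX p)
      (fun s => expect (margY p) fun z => likelihoodRatio pU (u s, z)) = 1 := by
    have hmean := expect_expect_likelihoodRatio (hp.pushforward (Prod.map u id))
    simp only [margX_pushforward, margY_pushforward, expect_pushforward] at hmean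
    exact hmean
  simp only [margX_iid, margY_iid]
  have hinner : ∀ s : Fin n → S, expect (iidPmf (margY p))
      (fun z => ∏ i, likelihoodRatio pU (u (s i), z i)) =
      ∏ i, expect (margY p) fun z => likelihoodRatio pU (u (s i), z) := fun s =>
    expect_iidPmf_prod (margY p) fun i z => likelihoodRatio pU (u (s i), z)
  simp only [hinner]
  rw [expect_iidPmf_prod (margX p) fun _ s => expect (margY p) fun z => likelihoodRatio pU (u s, z)]
  simp only [hletter, Finset.prod_const_one]

lemma le_prod_likelihoodRatio_of_mem_typicalSet (hp : IsPmf p) (u : S → U) {F : J → S × Z → ℝ}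
    {j : J} (hj : F j = fun t => -infoDensity (pushforward (Prod.map u id) p) (u t.1, t.2))
    {η : ℝ} {n : ℕ} {t : (Fin n → S) × (Fin n → Z)} (ht : t ∈ typicalSet p F η n) :
    2 ^ (n * (MI (pushforward (Prod.map u id) p) - η)) ≤
      ∏ i, likelihoodRatio (pushforward (Prod.map u id) p) (u (t.1 i), t.2 i) := by
  set pU := pushforward (Prod.map u id) p with hpU
  have hpU_pmf : IsPmf pU := hp.pushforward _
  have hmean : expect p (F j) = -MI pU := by
    rw [← expect_infoDensity hpU_pmf, ← neg_one_mul, ← expect_const_mul]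
    nth_rw 2 [hpU]
    rw [expect_pushforward, hj]
    simp only [neg_one_mul]
    rfl
  have hpos : ∀ i, 0 < pU (u (t.1 i), t.2 i) := fun i =>
    (pos_of_iid_pos hp.1 ht.1 i).trans_le (le_pushforward hp.1 (Prod.map u id) _)
  have hsum := ht.2 j
  rw [hmean, hj, Finset.sum_neg_distrib] at hsum
  rw [prod_likelihoodRatio hpU_pmf.1 (t := fun i => (u (t.1 i), t.2 i)) hpos]
  exact Real.rpow_le_rpow_of_exponent_le one_le_two (by linarith)

theorem exists_blockCode [Fintype V] [Fintype J] (hp : IsPmf p) (u : S → U) (v : S → V)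
    (c : J → S × Z → ℝ) {η : ℝ} (hη : 0 < η) (n K M : ℕ) [NeZero n] [NeZero K] [NeZero M] :
    ∃ (f : (Fin n → S) → Fin M) (gU : Fin M → (Fin n → U) → Fin n → Z)
      (gV : Fin M → (Fin n → V) → Fin n → Z),
      prob (iidPmf (margX p)) (failureSet (typicalSet p c η n) (fun s i => u (s i))
        (fun s i => v (s i)) f gU gV) ≤
      (∑ j, variance p (codingStatistic p u v c j)) / (η ^ 2 * n) +
        Real.exp (-(K / 2 ^ (n * (MI p + η)))) +
        K / M * ((2 ^ (n * (MI (pushforward (Prod.map u id) p) - η)))⁻¹ +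
          (2 ^ (n * (MI (pushforward (Prod.map v id) p) - η)))⁻¹) := by
  set A := typicalSet p (codingStatistic p u v c) η n
  have hlr : ∀ {W : Type} [Fintype W] (w : S → W) (y : Fin n → W) (z : Fin n → Z),
      0 ≤ ∏ i, likelihoodRatio (pushforward (Prod.map w id) p) (y i, z i) := fun w y z =>
    Finset.prod_nonneg fun i _ => likelihoodRatio_nonneg (hp.pushforward _).1 _
  obtain ⟨f, gU, gV, hfail⟩ := exists_code_prob_failureSet_le (hp.iid n) (A := A)
    (Real.rpow_pos_of_pos two_pos _)
    (fun t ht => iid_le_of_mem_typicalSet hp (j := Sum.inl 0) rfl ht)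
    (hlr u) (hlr v) (expect_expect_prod_likelihoodRatio hp u n).le
    (expect_expect_prod_likelihoodRatio hp v n).le
    (Real.rpow_pos_of_pos two_pos _) (Real.rpow_pos_of_pos two_pos _)
    (fun t ht => le_prod_likelihoodRatio_of_mem_typicalSet hp u (j := Sum.inl 1) rfl ht)
    (fun t ht => le_prod_likelihoodRatio_of_mem_typicalSet hp v (j := Sum.inl 2) rfl ht) K M
  refine ⟨f, gU, gV, ?_⟩
  rw [← margX_iid p n]
  refine (prob_mono (hp.iid n).margX.1 (failureSet_anti ?_ _ _ f gU gV)).trans <|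
    hfail.trans ?_
  · exact fun t ht => ⟨ht.1, fun j => ht.2 (Sum.inr j)⟩
  · gcongr
    exact prob_compl_typicalSet_le hp _ hη n

end BlockCoding

section Rates

lemma exists_nat_between_rpow {x : ℝ} (hx : 0 ≤ x) :
    ∃ N : ℕ, (2 : ℝ) ^ x ≤ N ∧ N ≤ 2 * (2 : ℝ) ^ x := by
  have hone : (1 : ℝ) ≤ 2 ^ x := Real.one_le_rpow one_le_two hx
  exact ⟨⌈(2 : ℝ) ^ x⌉₊, Nat.le_ceil _, Nat.ceil_le_two_mul (by linarith)⟩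

lemma exp_neg_le_inv {x : ℝ} (hx : 0 < x) : Real.exp (-x) ≤ x⁻¹ := by
  rw [Real.exp_neg]
  exact inv_anti₀ hx (by linarith [Real.add_one_le_exp x])

lemma exists_code_sizes {I IU IV R η : ℝ} (hI : 0 ≤ I) (hR : 0 ≤ R) (hU : I - IU ≤ R)
    (hV : I - IV ≤ R) (hη : 0 ≤ η) (n : ℕ) :
    ∃ K M : ℕ, 0 < K ∧ 0 < M ∧ Real.logb 2 M ≤ n * (R + 4 * η) + 1 ∧
      Real.exp (-(K / 2 ^ (n * (I + η)))) +
        K / M * ((2 ^ (n * (IU - η)))⁻¹ + (2 ^ (n * (IV - η)))⁻¹) ≤ 5 * 2 ^ (-(n * η)) := by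
  have hpow : ∀ x : ℝ, (0 : ℝ) < 2 ^ x := Real.rpow_pos_of_pos two_pos
  obtain ⟨K, hKlow, hKup⟩ := exists_nat_between_rpow (x := n * (I + 2 * η)) (by positivity)
  obtain ⟨M, hMlow, hMup⟩ := exists_nat_between_rpow (x := n * (R + 4 * η)) (by positivity)
  have hK : (0 : ℝ) < K := (hpow _).trans_le hKlow
  have hM : (0 : ℝ) < M := (hpow _).trans_le hMlow
  refine ⟨K, M, Nat.cast_pos.mp hK, Nat.cast_pos.mp hM, ?_, ?_⟩
  · calc Real.logb 2 M ≤ Real.logb 2 (2 * 2 ^ (n * (R + 4 * η))) :=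
          Real.logb_le_logb_of_le one_lt_two hM hMup
      _ = n * (R + 4 * η) + 1 := by
          rw [Real.logb_mul two_ne_zero (hpow _).ne', Real.logb_rpow two_pos (by norm_num),
            Real.logb_self_eq_one one_lt_two, add_comm]
  have hcover : Real.exp (-(K / 2 ^ (n * (I + η)))) ≤ 2 ^ (-(n * η)) := by
    have hratio : (2 : ℝ) ^ (n * η) ≤ K / 2 ^ (n * (I + η)) := by
      rw [le_div_iff₀ (hpow _), ← Real.rpow_add two_pos]
      exact (Real.rpow_le_rpow_of_exponent_le one_le_two (by linarith)).trans hKlow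
    calc Real.exp (-(K / 2 ^ (n * (I + η)))) ≤ Real.exp (-2 ^ (n * η)) :=
          Real.exp_le_exp.mpr (neg_le_neg hratio)
      _ ≤ (2 ^ (n * η))⁻¹ := exp_neg_le_inv (hpow _)
      _ = 2 ^ (-(n * η)) := (Real.rpow_neg zero_le_two _).symm
  have hpack : ∀ J, I - J ≤ R → K / M * (2 ^ (n * (J - η)))⁻¹ ≤ (2 : ℝ) * 2 ^ (-(n * η)) := by
    intro J hJ
    calc K / M * ((2 : ℝ) ^ (n * (J - η)))⁻¹
        ≤ 2 * 2 ^ (n * (I + 2 * η)) / 2 ^ (n * (R + 4 * η)) * (2 ^ (n * (J - η)))⁻¹ := by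
          gcongr
      _ = 2 * 2 ^ (n * (I - J - R) - n * η) := by
          rw [mul_div_assoc, ← Real.rpow_sub two_pos, ← Real.rpow_neg zero_le_two, mul_assoc,
            ← Real.rpow_add two_pos]
          ring_nf
      _ ≤ 2 * 2 ^ (-(n * η)) := by
          gcongr
          · exact one_le_two
          · linarith [mul_nonneg n.cast_nonneg (sub_nonneg.mpr hJ)]
  linarith [mul_add ((K : ℝ) / M) (2 ^ (n * (IU - η)))⁻¹ (2 ^ (n * (IV - η)))⁻¹,
    hpack IU hU, hpack IV hV]

lemma tendsto_codingError (V : ℝ) {η : ℝ} (hη : 0 < η) :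
    Filter.Tendsto (fun n : ℕ => V / (η ^ 2 * n) + 5 * (2 : ℝ) ^ (-(n * η))) Filter.atTop
      (nhds 0) := by
  have hchebyshev : Filter.Tendsto (fun n : ℕ => V / (η ^ 2 * n)) Filter.atTop (nhds 0) :=
    (tendsto_const_div_atTop_nhds_zero_nat (V / η ^ 2)).congr fun n => div_div _ _ _
  have hgeometric : Filter.Tendsto (fun n : ℕ => ((2 : ℝ) ^ (-η)) ^ n) Filter.atTop (nhds 0) :=
    tendsto_pow_atTop_nhds_zero_of_lt_one (by positivity)
      (Real.rpow_lt_one_of_one_lt_of_neg one_lt_two (neg_lt_zero.mpr hη))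
  have hexponent : ∀ n : ℕ, (2 : ℝ) ^ (-(n * η)) = ((2 : ℝ) ^ (-η)) ^ n := fun n => by
    rw [← Real.rpow_mul_natCast zero_le_two]
    ring_nf
  simpa only [hexponent, mul_zero, add_zero] using hchebyshev.add (hgeometric.const_mul 5)

variable {S U V Z J : Type} [Fintype S] [Fintype U] [Fintype V] [Fintype Z] [Finite J]
  {p : S × Z → ℝ}

theorem exists_blockCode_of_rate (hp : IsPmf p) (u : S → U) (v : S → V) (c : J → S × Z → ℝ)
    {R : ℝ} (hR : 0 ≤ R) (hU : MI p - MI (pushforward (Prod.map u id) p) ≤ R)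
    (hV : MI p - MI (pushforward (Prod.map v id) p) ≤ R) {ε : ℝ} (hε : 0 < ε) :
    ∃ n M : ℕ, 0 < n ∧ Real.logb 2 M / n ≤ R + ε ∧
      ∃ (f : (Fin n → S) → Fin M) (gU : Fin M → (Fin n → U) → Fin n → Z)
        (gV : Fin M → (Fin n → V) → Fin n → Z),
        prob (iidPmf (margX p)) (failureSet (typicalSet p c ε n) (fun s i => u (s i))
          (fun s i => v (s i)) f gU gV) ≤ ε := by
  set η := ε / 5 with hη_def
  have hη : 0 < η := by positivity
  have := Fintype.ofFinite J
  set σ := ∑ j, variance p (codingStatistic p u v c j)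
  obtain ⟨n, herror, hn_inv, hn⟩ := (((tendsto_codingError σ hη).eventually_le_const hε).and
    ((tendsto_one_div_atTop_nhds_zero_nat (𝕜 := ℝ)).eventually_le_const hη |>.and
      (Filter.eventually_gt_atTop 0))).exists
  have hn_cast : (0 : ℝ) < n := Nat.cast_pos.mpr hn
  obtain ⟨K, M, hK, hM, hrate, hbound⟩ := exists_code_sizes (MI_nonneg hp) hR hU hV hη.le n
  have := NeZero.of_pos hn
  have := NeZero.of_pos hK
  have := NeZero.of_pos hM
  obtain ⟨f, gU, gV, hfail⟩ := exists_blockCode hp u v c hη n K M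
  refine ⟨n, M, hn, ?_, f, gU, gV, ?_⟩
  · calc Real.logb 2 M / n ≤ (n * (R + 4 * η) + 1) / n := by gcongr
      _ = R + 4 * η + 1 / n := by rw [add_div, mul_div_cancel_left₀ _ hn_cast.ne']
      _ ≤ R + ε := by linarith
  · have htypical : typicalSet p c η n ⊆ typicalSet p c ε n := fun t ht =>
      ⟨ht.1, fun j => (ht.2 j).trans (by gcongr; linarith)⟩
    refine (prob_mono hp.margX.iidPmf.1 (failureSet_anti htypical _ _ f gU gV)).trans
      (hfail.trans ?_)
    linarith

end Rates

section Achievability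

lemma expect_average_le {Ω : Type} [Fintype Ω] {P : Ω → ℝ} (hP : IsPmf P) {F : Set Ω} {n : ℕ}
    (hn : 0 < n) {C : Ω → Fin n → ℝ} {d D : ℝ} (hd : ∀ ω ∉ F, ∑ i, C ω i ≤ n * d)
    (hD : ∀ ω i, C ω i ≤ d + D) :
    expect P (fun ω => (n : ℝ)⁻¹ * ∑ i, C ω i) ≤ d + D * prob P F := by
  have hn_cast : (0 : ℝ) < n := Nat.cast_pos.mpr hn
  refine expect_le_add_mul_prob hP (fun ω hω => ?_) fun ω => ?_
  · rw [inv_mul_le_iff₀ hn_cast]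
    exact hd ω hω
  · rw [inv_mul_le_iff₀ hn_cast]
    refine (Finset.sum_le_card_nsmul Finset.univ (C ω) _ fun i _ => hD ω i).trans_eq ?_
    rw [Finset.card_univ, Fintype.card_fin, nsmul_eq_mul]

lemma exists_forall_le_add {ι κ : Type} [Finite ι] [Finite κ] (F : ι → κ → ℝ) (d : ι → ℝ) :
    ∃ D, 0 ≤ D ∧ ∀ i k, F i k ≤ d i + D := by
  obtain ⟨D, hD⟩ := (Set.finite_range fun t : ι × κ => F t.1 t.2 - d t.1).bddAbove
  refine ⟨max D 0, le_max_right _ _, fun i k => ?_⟩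
  have := hD ⟨(i, k), rfl⟩
  linarith [le_max_left D 0]

theorem exists_blockCode_expect_le {S U V Z J : Type} [Fintype S] [Fintype U] [Fintype V]
    [Fintype Z] [Finite J] {p : S × Z → ℝ} (hp : IsPmf p) (u : S → U) (v : S → V)
    (c : J → S × Z → ℝ) {R : ℝ} (hR : 0 ≤ R)
    (hU : MI p - MI (pushforward (Prod.map u id) p) ≤ R)
    (hV : MI p - MI (pushforward (Prod.map v id) p) ≤ R) {ε : ℝ} (hε : 0 < ε) :
    ∃ n M : ℕ, 0 < n ∧ Real.logb 2 M / n ≤ R + ε ∧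
      ∃ (f : (Fin n → S) → Fin M) (gU : Fin M → (Fin n → U) → Fin n → Z)
        (gV : Fin M → (Fin n → V) → Fin n → Z),
        prob (iidPmf (margX p))
          {s | gV (f s) (fun i => v (s i)) ≠ gU (f s) fun i => u (s i)} ≤ ε ∧
        (∀ j, expect (iidPmf (margX p)) (fun s => (n : ℝ)⁻¹ *
          ∑ i, c j (s i, gU (f s) (fun i => u (s i)) i)) ≤ expect p (c j) + ε) ∧
        ∀ j, expect (iidPmf (margX p)) (fun s => (n : ℝ)⁻¹ *
          ∑ i, c j (s i, gV (f s) (fun i => v (s i)) i)) ≤ expect p (c j) + ε := by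
  obtain ⟨D, hD0, hD⟩ := exists_forall_le_add c fun j => expect p (c j)
  obtain ⟨η, hη, hηε⟩ : ∃ η > 0, η + D * η = ε := ⟨ε / (1 + D), by positivity, by field_simp⟩
  have hη_le : η ≤ ε := by linarith [mul_nonneg hD0 hη.le]
  obtain ⟨n, M, hn, hrate, f, gU, gV, hfail⟩ := exists_blockCode_of_rate hp u v c hR hU hV hη
  set F := failureSet (typicalSet p c η n) (fun s i => u (s i)) (fun s i => v (s i)) f gU gV
  set wU : (Fin n → S) → Fin n → Z := fun s => gU (f s) fun i => u (s i)
  set wV : (Fin n → S) → Fin n → Z := fun s => gV (f s) fun i => v (s i)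
  have hsuccess : ∀ s ∉ F, (s, wU s) ∈ typicalSet p c η n ∧ wV s = wU s :=
    fun s hs => not_not.mp hs
  have hmean : ∀ j (w : (Fin n → S) → Fin n → Z), (∀ s ∉ F, w s = wU s) →
      expect (iidPmf (margX p)) (fun s => (n : ℝ)⁻¹ * ∑ i, c j (s i, w s i)) ≤
        expect p (c j) + ε := by
    intro j w hw
    have haverage := expect_average_le hp.margX.iidPmf (F := F) hn
      (C := fun s i => c j (s i, w s i)) (d := expect p (c j) + η) (D := D)
      (fun s hs => by simpa only [hw s hs] using (hsuccess s hs).1.2 j)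
      fun s i => by linarith [hD j (s i, w s i)]
    linarith [mul_le_mul_of_nonneg_left hfail hD0]
  refine ⟨n, M, hn, hrate.trans (by gcongr), f, gU, gV, ?_, fun j => hmean j wU fun _ _ => rfl,
    fun j => hmean j wV fun s hs => (hsuccess s hs).2⟩
  refine (prob_mono hp.margX.iidPmf.1 fun s hs => ?_).trans (hfail.trans hη_le)
  exact by_contra fun hF => hs (hsuccess s hF).2

variable {𝒳 𝒴 Xh Yh : Type} [Fintype 𝒳] [Fintype 𝒴]

lemma CRAchievable.mono {q : 𝒳 × 𝒴 → ℝ} {δ1 : 𝒳 → Xh → ℝ} {δ2 : 𝒴 → Yh → ℝ}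
    {d1 d2 d1' d2' R : ℝ} (h : CRAchievable q δ1 δ2 d1 d2 R) (hd1 : d1 ≤ d1') (hd2 : d2 ≤ d2') :
    CRAchievable q δ1 δ2 d1' d2' R := by
  intro ε hε
  obtain ⟨n, m, f, g1, g2, φ1, φ2, hn, hrate, hΔ1, hΔ2, herr⟩ := h ε hε
  exact ⟨n, m, f, g1, g2, φ1, φ2, hn, hrate, by linarith, by linarith, herr⟩

theorem crAchievable_of_MI_sub_le [Fintype Xh] [Fintype Yh] {p : (𝒳 × 𝒴) × Xh × Yh → ℝ}
    (hp : IsPmf p) (δ1 : 𝒳 → Xh → ℝ) (δ2 : 𝒴 → Yh → ℝ) {R : ℝ} (hR : 0 ≤ R)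
    (hX : MI p - MI (pushforward (Prod.map Prod.fst id) p) ≤ R)
    (hY : MI p - MI (pushforward (Prod.map Prod.snd id) p) ≤ R) :
    CRAchievable (margX p) δ1 δ2 (expect p fun t => δ1 t.1.1 t.2.1)
      (expect p fun t => δ2 t.1.2 t.2.2) R := by
  intro ε hε
  obtain ⟨n, M, hn, hrate, f, gY, gX, hdisagree, hdistY, hdistX⟩ :=
    exists_blockCode_expect_le hp Prod.snd Prod.fst
      ![fun t => δ1 t.1.1 t.2.1, fun t => δ2 t.1.2 t.2.2] hR hY hX hε
  have hagree : ∀ (Q : (Fin n → 𝒳) × (Fin n → 𝒴) → Prop) [DecidablePred Q],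
      (∀ s, gX (f s) (fun i => (s i).1) = gY (f s) (fun i => (s i).2) →
        Q (fun i => (s i).1, fun i => (s i).2)) →
      (∑ xy, if Q xy then 0 else iid (margX p) n xy) ≤ ε := by
    intro Q _ hQ
    rw [← prob_not_eq_sum_ite, prob, expect_iid]
    exact (prob_mono hp.margX.iidPmf.1
      (S := {s | ¬ Q (fun i => (s i).1, fun i => (s i).2)}) fun s hs h => hs (hQ s h)).trans
        hdisagree
  refine ⟨n, M, fun xy => f fun i => (xy.1 i, xy.2 i), fun t i => (gY t.1 t.2 i).1,
    fun t i => (gX t.1 t.2 i).2, fun t i => (gY t.1 t.2 i).2, fun t i => (gX t.1 t.2 i).1, hn,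
    hrate, ?_, ?_, hagree _ fun s hs => ?_, hagree _ fun s hs => ?_⟩
  · exact (expect_iid (margX p) _).trans_le (hdistY 0)
  · exact (expect_iid (margX p) _).trans_le (hdistX 1)
  · exact funext fun i => congrArg Prod.fst (congrFun hs i)
  · exact funext fun i => congrArg Prod.snd (congrFun hs i).symm

end Achievability

section SingleLetter

variable {α β : Type}

/-- The joint law of a letter of law `q` and the output of the test channel `W` fed with it. -/
def jointLaw (q : α → ℝ) (W : α → β → ℝ) (t : α × β) : ℝ :=
  q t.1 * W t.1 t.2

variable [Fintype β]

lemma margX_jointLaw (q : α → ℝ) {W : α → β → ℝ} (hW : IsCondPmf W) :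
    margX (jointLaw q W) = q := by
  funext a
  simp only [margX, jointLaw, ← Finset.mul_sum, (hW _).2, mul_one]

variable [Fintype α]

lemma IsPmf.jointLaw {q : α → ℝ} (hq : IsPmf q) {W : α → β → ℝ} (hW : IsCondPmf W) :
    IsPmf (jointLaw q W) := by
  refine ⟨fun t => mul_nonneg (hq.1 _) ((hW _).1 _), ?_⟩
  simp only [TWR.jointLaw, Fintype.sum_prod_type, ← Finset.mul_sum, (hW _).2, mul_one, hq.2]

lemma expect_jointLaw (q : α → ℝ) (W : α → β → ℝ) (F : α × β → ℝ) :
    expect (jointLaw q W) F = ∑ a, ∑ b, q a * W a b * F (a, b) :=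
  Fintype.sum_prod_type _

lemma IsPmf.exists_jointLaw_eq {p : α × β → ℝ} (hp : IsPmf p) :
    ∃ W : α → β → ℝ, IsCondPmf W ∧ TWR.jointLaw (TWR.margX p) W = p := by
  have := hp.nonempty.map Prod.snd
  refine ⟨fun a => if TWR.margX p a = 0 then uniformPmf β else fun b => p (a, b) / TWR.margX p a,
    fun a => ?_, funext fun t => ?_⟩
  · dsimp only
    split_ifs with ha
    · exact isPmf_uniformPmf β
    · exact ⟨fun b => div_nonneg (hp.1 _) (hp.margX.1 a),
        (Finset.sum_div _ _ _).symm.trans (div_self ha)⟩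
  · by_cases ht : TWR.margX p t.1 = 0
    · have hpt : p t = 0 := ((le_margX hp.1 t).trans_eq ht).antisymm (hp.1 t)
      simp only [TWR.jointLaw, ht, zero_mul, hpt]
    · simp only [TWR.jointLaw, ht, if_false]
      exact mul_div_cancel₀ _ ht

lemma margRD_le_MI {r : α × β → ℝ} (hr : IsPmf r) {δ : α → β → ℝ} {d : ℝ}
    (hd : expect r (fun t => δ t.1 t.2) ≤ d) : margRD (margX r) δ d ≤ MI r := by
  obtain ⟨W, hW, hWr⟩ := hr.exists_jointLaw_eq
  refine csInf_le ⟨0, ?_⟩ ⟨W, hW, ?_, congrArg MI hWr.symm⟩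
  · rintro _ ⟨W', hW', -, rfl⟩
    exact MI_nonneg (hr.margX.jointLaw hW')
  · rwa [← expect_jointLaw (margX r) W fun t => δ t.1 t.2, hWr]

lemma pushforward_fst (p : α × β → ℝ) : pushforward Prod.fst p = margX p :=
  ext_of_expect fun F => by rw [expect_pushforward, expect_margX]

lemma pushforward_snd (p : α × β → ℝ) : pushforward Prod.snd p = margY p :=
  ext_of_expect fun F => by rw [expect_pushforward, expect_margY]

lemma margRD_pushforward_le {γ δ : Type} [Fintype γ] [Fintype δ] {p : α × β → ℝ} (hp : IsPmf p)
    (g : α → γ) (h : β → δ) {c : γ → δ → ℝ} {d : ℝ}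
    (hd : expect p (fun t => c (g t.1) (h t.2)) ≤ d) :
    margRD (pushforward g (margX p)) c d ≤ MI (pushforward (Prod.map g id) p) := by
  have hcost : expect (pushforward (Prod.map g h) p) (fun t => c t.1 t.2) ≤ d := by
    rw [expect_pushforward]
    exact hd
  have hfactor : pushforward (Prod.map id h) (pushforward (Prod.map g id) p) =
      pushforward (Prod.map g h) p := by
    rw [pushforward_pushforward, Prod.map_comp_map, Function.id_comp, Function.comp_id]
  calc margRD (pushforward g (margX p)) c d
      ≤ MI (pushforward (Prod.map g h) p) := by
        rw [← margX_pushforward g h p]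
        exact margRD_le_MI (hp.pushforward _) hcost
    _ ≤ MI (pushforward (Prod.map g id) p) := by
        rw [← hfactor]
        exact MI_pushforward_le (hp.pushforward _) id h

variable {𝒳 𝒴 Xh Yh : Type} [Fintype 𝒳] [Fintype 𝒴] [Fintype Xh] [Fintype Yh]

theorem CRRD_le_max_MI_sub {p : (𝒳 × 𝒴) × Xh × Yh → ℝ} (hp : IsPmf p) {δ1 : 𝒳 → Xh → ℝ}
    {δ2 : 𝒴 → Yh → ℝ} {d1 d2 : ℝ} (hd1 : expect p (fun t => δ1 t.1.1 t.2.1) ≤ d1)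
    (hd2 : expect p (fun t => δ2 t.1.2 t.2.2) ≤ d2) :
    CRRD (margX p) δ1 δ2 d1 d2 ≤
      max (MI p - MI (pushforward (Prod.map Prod.fst id) p))
        (MI p - MI (pushforward (Prod.map Prod.snd id) p)) := by
  have hnonneg : 0 ≤ max (MI p - MI (pushforward (Prod.map Prod.fst id) p))
      (MI p - MI (pushforward (Prod.map Prod.snd id) p)) :=
    le_max_of_le_left (sub_nonneg.mpr (MI_pushforward_le hp Prod.fst id))
  exact csInf_le ⟨0, fun r hr => hr.1⟩ ⟨hnonneg, (crAchievable_of_MI_sub_le hp δ1 δ2 hnonneg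
    (le_max_left _ _) (le_max_right _ _)).mono hd1 hd2⟩

theorem CRRD_le_max_MI_sub_margRD {p : (𝒳 × 𝒴) × Xh × Yh → ℝ} (hp : IsPmf p) {δ1 : 𝒳 → Xh → ℝ}
    {δ2 : 𝒴 → Yh → ℝ} {d1 d2 : ℝ} (hd1 : expect p (fun t => δ1 t.1.1 t.2.1) ≤ d1)
    (hd2 : expect p (fun t => δ2 t.1.2 t.2.2) ≤ d2) :
    CRRD (margX p) δ1 δ2 d1 d2 ≤
      max (MI p - margRD (margX (margX p)) δ1 d1) (MI p - margRD (margY (margX p)) δ2 d2) := by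
  have hX := margRD_pushforward_le hp Prod.fst Prod.fst hd1
  have hY := margRD_pushforward_le hp Prod.snd Prod.snd hd2
  rw [pushforward_fst] at hX
  rw [pushforward_snd] at hY
  exact (CRRD_le_max_MI_sub hp hd1 hd2).trans <|
    max_le_max (sub_le_sub_left hX _) (sub_le_sub_left hY _)

lemma exists_isCondPmf_of_normal (q : 𝒳 × 𝒴 → ℝ) {δ1 : 𝒳 → Xh → ℝ} {δ2 : 𝒴 → Yh → ℝ}
    (hδ1 : ∀ x, ∃ xh, δ1 x xh = 0) (hδ2 : ∀ y, ∃ yh, δ2 y yh = 0) {d1 d2 : ℝ} (hd1 : 0 ≤ d1)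
    (hd2 : 0 ≤ d2) :
    ∃ W : 𝒳 × 𝒴 → Xh × Yh → ℝ, IsCondPmf W ∧
      (∑ xy : 𝒳 × 𝒴, ∑ z : Xh × Yh, q xy * W xy z * δ1 xy.1 z.1) ≤ d1 ∧
      (∑ xy : 𝒳 × 𝒴, ∑ z : Xh × Yh, q xy * W xy z * δ2 xy.2 z.2) ≤ d2 := by
  choose a ha using hδ1
  choose b hb using hδ2
  refine ⟨fun xy => Pi.single (a xy.1, b xy.2) 1, fun xy => ⟨?_, Fintype.sum_pi_single' _ _⟩,
    ?_, ?_⟩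
  · exact (Pi.single_nonneg (i := (a xy.1, b xy.2)) (α := fun _ => ℝ)).mpr zero_le_one
  · simpa [Pi.single_apply, ha] using hd1
  · simpa [Pi.single_apply, hb] using hd2

theorem crrd_joint_marginal_upper_bound_general {q : 𝒳 × 𝒴 → ℝ} (hq : IsPmf q)
    {δ1 : 𝒳 → Xh → ℝ} {δ2 : 𝒴 → Yh → ℝ} {d1 d2 : ℝ}
    (hfeasible : ∃ W : 𝒳 × 𝒴 → Xh × Yh → ℝ, IsCondPmf W ∧
      (∑ xy : 𝒳 × 𝒴, ∑ z : Xh × Yh, q xy * W xy z * δ1 xy.1 z.1) ≤ d1 ∧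
      (∑ xy : 𝒳 × 𝒴, ∑ z : Xh × Yh, q xy * W xy z * δ2 xy.2 z.2) ≤ d2) :
    CRRD q δ1 δ2 d1 d2 ≤
      max (jointRD q δ1 δ2 d1 d2 - margRD (margX q) δ1 d1)
        (jointRD q δ1 δ2 d1 d2 - margRD (margY q) δ2 d2) := by
  rw [max_sub_sub_left, le_sub_iff_add_le]
  obtain ⟨W₀, hW₀, hW₀d1, hW₀d2⟩ := hfeasible
  refine le_csInf ⟨_, W₀, hW₀, hW₀d1, hW₀d2, rfl⟩ ?_
  rintro _ ⟨W, hW, hd1, hd2, rfl⟩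
  have hbound := CRRD_le_max_MI_sub_margRD (hq.jointLaw hW)
    ((expect_jointLaw q W fun t => δ1 t.1.1 t.2.1).trans_le hd1)
    ((expect_jointLaw q W fun t => δ2 t.1.2 t.2.2).trans_le hd2)
  rwa [margX_jointLaw q hW, max_sub_sub_left, le_sub_iff_add_le] at hbound

end SingleLetter

end TWR

open TWR in
/-- Corollary 7: the CR-RD function is bounded above via the
joint and marginal RD functions:
`R_CR(d1,d2) ≤ max{R_{XY}(d1,d2) − R_X(d1), R_{XY}(d1,d2) − R_Y(d2)}`. -/
theorem crrd_joint_marginal_upper_bound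
    {𝒳 𝒴 Xh Yh : Type} [Fintype 𝒳] [Fintype 𝒴] [Fintype Xh] [Fintype Yh]
    (q : 𝒳 × 𝒴 → ℝ) (hq : IsPmf q)
    (δ1 : 𝒳 → Xh → ℝ) (δ2 : 𝒴 → Yh → ℝ) (d1max d2max : ℝ)
    (hδ1 : ∀ x xh, 0 ≤ δ1 x xh ∧ δ1 x xh ≤ d1max)
    (hδ2 : ∀ y yh, 0 ≤ δ2 y yh ∧ δ2 y yh ≤ d2max)
    (hδ1n : ∀ x, ∃ xh, δ1 x xh = 0) (hδ2n : ∀ y, ∃ yh, δ2 y yh = 0)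
    (d1 d2 : ℝ) (hd1 : 0 ≤ d1) (hd2 : 0 ≤ d2) :
    CRRD q δ1 δ2 d1 d2 ≤
      max (jointRD q δ1 δ2 d1 d2 - margRD (margX q) δ1 d1)
          (jointRD q δ1 δ2 d1 d2 - margRD (margY q) δ2 d2) := by
  exact crrd_joint_marginal_upper_bound_general hq
    (exists_isCondPmf_of_normal q hδ1n hδ2n hd1 hd2)
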